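/- Let I ⊆ R be a monomial ideal with minimal monomial generating set G(I) = {f_1,…,f_r}, let f be a monomial, set L = (f) + I, and let X_L be the set of new variables needed to fully polarize L; for a monomial h occurring in G(L), let h^pol denote its polarization computed in R[X_L]. Then: (i) depth(R[X_L]/L^pol) − depth(R[X_L]/(f_1^pol,…,f_r^pol)) = depth(R/L) − depth(R/I); (ii) reg(R[X_L]/L^pol) = reg(R/L) and reg(R[X_L]/(f_1^pol,…,f_r^pol)) = reg(R/I). -/

import Mathlib

/-!
Polarization is undone by substituting `x_i` for the new variables one at a time, and each
substitution is a hyperplane section by a regular linear form.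

Suppose `γ i ≥ 2`, write `y` for the variable `x_{i,γ i}`, and let `J` be generated by the
polarizations with respect to `γ`.  Every generator
contains `y` at most once, so `J = J0 + y J1` with `J0`, `J1` generated by monomials without `y`.
A generator without `y` does not contain `x_i` either, hence `x_i` is regular modulo `J0`.  From
this `y - x_i` is regular modulo `J` (`cut_of`), and the quotient is the quotient by
`J0 + x_i J1`, which is the polarization for `γ i` lowered by one.  After `∑ (γ i - 1)` steps
(`shift_chain`) one arrives at the original ideal.

A section by a regular linear form `θ` (`Cut`) lowers the depth by exactly one, for every ideal:
`Ext^i(k, M/θM)` vanishes for `i < n` iff `Ext^i(k, M)` vanishes for `i < n + 1`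
(`extVanish_succ_iff`), and the depth may be computed over the smaller polynomial ring
(`extVanish_change`).  Graded free resolutions reduce modulo `θ` to graded free resolutions with
the same twists (`Cut.resBound_cut`), and conversely lift, by graded Nakayama
(`Cut.resBound_lift`), so the regularity is unchanged.

Applied to the generators of `L` and of `I` with the same `γ`, the two depths grow by the same
number, and the two regularities do not change.
-/

open MvPolynomial CategoryTheory Opposite

noncomputable section

/-- The polynomial ring `K[x_v : v ∈ σ]` over the field `K`. -/
abbrev MvPoly (K : Type) [Field K] (σ : Type) : Type := MvPolynomial σ K

variable (K : Type) [Field K] (σ : Type)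

/-- The graded maximal ideal `m = (x_v : v ∈ σ)` generated by all the variables. -/
def maxIdeal : Ideal (MvPoly K σ) := Ideal.span (Set.range MvPolynomial.X)

/-- The depth of `R/I` with respect to the graded maximal ideal, defined as
`inf { i | Ext^i(R/m, R/I) ≠ 0 }` (with value `⊤` for the zero module). -/
def depthQ (I : Ideal (MvPoly K σ)) : ℕ∞ :=
  sInf { d : ℕ∞ | ∃ i : ℕ, d = i ∧
    Nontrivial (((Ext (MvPoly K σ) (ModuleCat (MvPoly K σ)) i).obj
      (op (ModuleCat.of (MvPoly K σ) (MvPoly K σ ⧸ maxIdeal K σ)))).obj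
      (ModuleCat.of (MvPoly K σ) (MvPoly K σ ⧸ I))) }

/-- The degree-`e` homogeneous component condition, for an integer `e`
(for `e < 0` the component is zero). -/
def HomogComp (e : ℤ) (p : MvPoly K σ) : Prop :=
  if 0 ≤ e then p ∈ homogeneousSubmodule σ K e.toNat else p = 0

/-- `v` is a homogeneous element of degree `e` of the graded free module
`⊕_j R(-dg j)`. -/
def IsHomogVec {m : ℕ} (dg : Fin m → ℤ) (e : ℤ) (v : Fin m → MvPoly K σ) : Prop :=
  ∀ j, HomogComp K σ (e - dg j) (v j)

/-- The degree-`e` homogeneous component of `R/I`. -/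
def QuotComp (I : Ideal (MvPoly K σ)) (e : ℤ) : Submodule K (MvPoly K σ ⧸ I) :=
  if 0 ≤ e then
    Submodule.map (Ideal.Quotient.mkₐ K I).toLinearMap (homogeneousSubmodule σ K e.toNat)
  else ⊥

/-- A graded free resolution of `R/I` by finitely generated graded free modules
`F i = ⊕_{j < rk i} R(-dg i j)`, with degree preserving (degree zero) maps. -/
structure GradedFreeRes (I : Ideal (MvPoly K σ)) where
  rk : ℕ → ℕ
  dg : (i : ℕ) → Fin (rk i) → ℤ
  dmap : (i : ℕ) → ((Fin (rk (i + 1)) → MvPoly K σ) →ₗ[MvPoly K σ] (Fin (rk i) → MvPoly K σ))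
  aug : (Fin (rk 0) → MvPoly K σ) →ₗ[MvPoly K σ] (MvPoly K σ ⧸ I)
  aug_surj : Function.Surjective aug
  exact0 : Function.Exact (dmap 0) aug
  exactS : ∀ i, Function.Exact (dmap (i + 1)) (dmap i)
  graded : ∀ i (e : ℤ) v, IsHomogVec K σ (dg (i + 1)) e v → IsHomogVec K σ (dg i) e (dmap i v)
  aug_graded : ∀ (e : ℤ) v, IsHomogVec K σ (dg 0) e v → aug v ∈ QuotComp K σ I e

/-- `R/I` admits a graded free resolution all of whose twists `dg i j` satisfy
`dg i j - i ≤ r`. -/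
def ResBound (I : Ideal (MvPoly K σ)) (r : ℤ) : Prop :=
  ∃ F : GradedFreeRes K σ I, ∀ i j, F.dg i j - i ≤ r

open Classical in
/-- The Castelnuovo–Mumford regularity of `R/I`: the least `r` bounding the twists of
a graded free resolution of `R/I` (with the convention `⊥ = -∞` for the zero module). -/
def CMreg (I : Ideal (MvPoly K σ)) : WithBot ℤ :=
  if h : ∃ r : ℤ, ResBound K σ I r ∧ ∀ s : ℤ, ResBound K σ I s → r ≤ s
  then ((h.choose : ℤ) : WithBot ℤ) else ⊥

variable {n : ℕ}

/-- The monomial `x^a`. -/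
def mono (K : Type) [Field K] {n : ℕ} (a : Fin n →₀ ℕ) : MvPoly K (Fin n) :=
  MvPolynomial.monomial a 1

/-- A monomial ideal: an ideal generated by monomials. -/
def IsMonomialIdeal (I : Ideal (MvPoly K (Fin n))) : Prop :=
  ∃ S : Set (Fin n →₀ ℕ), I = Ideal.span (mono K '' S)

/-- A squarefree exponent vector. -/
def SqfreeExp (a : Fin n →₀ ℕ) : Prop := ∀ i, a i ≤ 1

/-- A squarefree monomial ideal: an ideal generated by squarefree monomials. -/
def IsSqfreeMonomialIdeal (I : Ideal (MvPoly K (Fin n))) : Prop :=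
  ∃ S : Set (Fin n →₀ ℕ), (∀ a ∈ S, SqfreeExp a) ∧ I = Ideal.span (mono K '' S)

/-- The set of polarization variables `x_{i,j}`, `2 ≤ j ≤ γ i`, needed to polarize a
monomial ideal whose minimal generators have degree at most `γ i` in the variable `x_i`. -/
def PolVars (n : ℕ) (γ : Fin n → ℕ) : Type := { p : Fin n × ℕ // 2 ≤ p.2 ∧ p.2 ≤ γ p.1 }

/-- The polarization of the power `x_i^c` (for `c ≤ γ i`): it equals `1` if `c = 0`;
`x_{i,2} ⋯ x_{i,γ_i} ⋅ x_i` if `c = γ i`; and `x_{i,2} ⋯ x_{i,c+1}` if `c < γ i`. -/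
def polFactor (K : Type) [Field K] {n : ℕ} (γ : Fin n → ℕ) (i : Fin n) (c : ℕ) :
    MvPoly K (Fin n ⊕ PolVars n γ) :=
  if c = 0 then 1
  else if hc : γ i ≤ c then
    MvPolynomial.X (Sum.inl i) *
      ∏ j ∈ (Finset.Icc 2 (γ i)).attach,
        MvPolynomial.X (Sum.inr ⟨(i, (j : ℕ)), by
          have h2 := Finset.mem_Icc.mp j.2
          exact ⟨h2.1, h2.2⟩⟩)
  else
    ∏ j ∈ (Finset.Icc 2 (c + 1)).attach,
      MvPolynomial.X (Sum.inr ⟨(i, (j : ℕ)), by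
        have h2 := Finset.mem_Icc.mp j.2
        exact ⟨h2.1, show (j : ℕ) ≤ γ i by omega⟩⟩)

/-- The polarization of the monomial `x^a`, with respect to the maximal degrees `γ`. -/
def polMono (K : Type) [Field K] {n : ℕ} (γ : Fin n → ℕ) (a : Fin n →₀ ℕ) :
    MvPoly K (Fin n ⊕ PolVars n γ) :=
  ∏ i : Fin n, polFactor K γ i (a i)

end

/-! ### Vanishing of Ext, regular elements and change of rings -/

noncomputable section
section
variable {A : Type} [CommRing A]

lemma ext_zero_iff {X : ModuleCat.{0} A} (P : ProjectiveResolution X) (Y : ModuleCat.{0} A) :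
    Subsingleton (((Ext A (ModuleCat.{0} A) 0).obj (op X)).obj Y) ↔
      ∀ φ : P.complex.X 0 ⟶ Y, P.complex.d 1 0 ≫ φ = 0 → φ = 0 := by
  rw [← ModuleCat.isZero_iff_subsingleton, (P.isoExt (R := A) 0 Y).isZero_iff,
    ← HomologicalComplex.exactAt_iff_isZero_homology,
    HomologicalComplex.exactAt_iff' _ 0 0 1 (by simp) (by simp),
    ShortComplex.moduleCat_exact_iff]
  constructor
  · intro h φ hφ
    obtain ⟨y, hy⟩ := h φ hφ
    rw [← hy]
    have : (P.complex.linearYonedaObj A Y).d 0 0 = 0 := HomologicalComplex.shape _ _ _ (by simp)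
    change (ConcreteCategory.hom ((P.complex.linearYonedaObj A Y).d 0 0)) y = 0
    rw [this]; rfl
  · intro h φ hφ
    refine ⟨0, ?_⟩
    rw [map_zero]
    exact (h φ hφ).symm

lemma ext_succ_iff {X : ModuleCat.{0} A} (P : ProjectiveResolution X) (Y : ModuleCat.{0} A)
    (i : ℕ) :
    Subsingleton (((Ext A (ModuleCat.{0} A) (i + 1)).obj (op X)).obj Y) ↔
      ∀ φ : P.complex.X (i + 1) ⟶ Y, P.complex.d (i + 2) (i + 1) ≫ φ = 0 →
        ∃ ψ : P.complex.X i ⟶ Y, P.complex.d (i + 1) i ≫ ψ = φ := by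
  rw [← ModuleCat.isZero_iff_subsingleton, (P.isoExt (R := A) (i + 1) Y).isZero_iff,
    ← HomologicalComplex.exactAt_iff_isZero_homology,
    HomologicalComplex.exactAt_iff' _ i (i + 1) (i + 2) (by simp) (by simp),
    ShortComplex.moduleCat_exact_iff]
  rfl

/-- Multiplication by an element annihilating `X` is null-homotopic on a projective resolution. -/
lemma exists_homotopy {X : ModuleCat.{0} A} (P : ProjectiveResolution X) (x : A)
    (hx : ∀ y : X, x • y = 0) :
    ∃ h : ∀ i, P.complex.X i ⟶ P.complex.X (i + 1),
      (x • 𝟙 (P.complex.X 0) = h 0 ≫ P.complex.d 1 0) ∧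
      ∀ i, x • 𝟙 (P.complex.X (i + 1)) =
        P.complex.d (i + 1) i ≫ h i + h (i + 1) ≫ P.complex.d (i + 2) (i + 1) := by
  have h1 : (x • 𝟙 P.complex) ≫ P.π = 0 := by
    have : x • 𝟙 X = 0 := by ext y; exact hx y
    apply HomologicalComplex.hom_ext
    intro i
    cases i with
    | succ i => simp
    | zero =>
      apply ModuleCat.hom_ext
      apply LinearMap.ext
      intro y
      change (P.π.f 0) (x • y) = 0
      rw [map_smul]
      exact hx _
  let H := ProjectiveResolution.liftHomotopyZero _ h1
  refine ⟨fun i => H.hom i (i + 1), ?_, fun i => ?_⟩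
  · have := H.comm 0
    rw [prevD_eq _ (show (ComplexShape.down ℕ).Rel 1 0 by simp)] at this
    simpa [dNext] using this
  · have := H.comm (i + 1)
    rw [prevD_eq _ (show (ComplexShape.down ℕ).Rel (i + 2) (i + 1) by simp),
      dNext_eq _ (show (ComplexShape.down ℕ).Rel (i + 1) i by simp)] at this
    simpa using this

/-- `Ext^i(X, Y) = 0` for all `i < n`. -/
def ExtVanish (X Y : ModuleCat.{0} A) (n : ℕ) : Prop :=
  ∀ i < n, Subsingleton (((Ext A (ModuleCat.{0} A) i).obj (op X)).obj Y)

section step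
variable {X Y Y' : ModuleCat.{0} A} (x : A) (hx : ∀ y : X, x • y = 0)
  (hreg : ∀ y : Y, x • y = 0 → y = 0) (p : Y ⟶ Y') (hp : Function.Surjective p)
  (hker : ∀ y : Y, p y = 0 ↔ ∃ z : Y, y = x • z)

include hreg in
lemma smul_hom_cancel {Z : ModuleCat.{0} A} (u v : Z ⟶ Y) (h : x • u = x • v) : u = v := by
  ext z
  have h1 : x • u z = x • v z := by
    change (x • u) z = (x • v) z
    rw [h]
  refine sub_eq_zero.mp (hreg _ ?_)
  rw [smul_sub, h1, sub_self]

include hker hreg in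
lemma factor_smul {Z : ModuleCat.{0} A} (u : Z ⟶ Y) (h : u ≫ p = 0) :
    ∃ v : Z ⟶ Y, u = x • v := by
  have h1 : ∀ z : Z, ∃ y : Y, u z = x • y := fun z => by
    rw [← hker]
    change (u ≫ p) z = 0
    rw [h]; rfl
  choose v hv using h1
  refine ⟨ModuleCat.ofHom ⟨⟨v, fun a b => ?_⟩, fun r a => ?_⟩, ?_⟩
  · refine sub_eq_zero.mp (hreg _ ?_)
    rw [smul_sub, smul_add, ← hv, ← hv, ← hv, map_add, sub_self]
  · refine sub_eq_zero.mp (hreg _ ?_)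
    rw [smul_sub, RingHom.id_apply, smul_comm, ← hv, ← hv, map_smul, sub_self]
  · ext z
    exact hv z

include hx hreg in
lemma ext_zero_of_regular :
    Subsingleton (((Ext A (ModuleCat.{0} A) 0).obj (op X)).obj Y) := by
  let P := ProjectiveResolution.of X
  rw [ext_zero_iff P]
  intro φ hφ
  obtain ⟨h, h0, -⟩ := exists_homotopy P x hx
  refine smul_hom_cancel x hreg _ _ ?_
  calc x • φ = (x • 𝟙 _) ≫ φ := by simp
    _ = x • 0 := by rw [h0, Category.assoc, hφ]; simp

include hx hreg hp hker in
/-- If `x` kills `X` and is regular on `Y`, with `Y' = Y/xY`, then multiplication by `x` is zero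
on `Ext(X, Y)`, so the long exact sequence breaks up into
`0 → Ext^i(X, Y) → Ext^i(X, Y') → Ext^(i+1)(X, Y) → 0`.  The statement records what this says
about vanishing ranges; the proof chases cocycles on a projective resolution of `X`. -/
lemma extVanish_succ_iff (n : ℕ) : ExtVanish X Y (n + 1) ↔ ExtVanish X Y' n := by
  let P := ProjectiveResolution.of X
  have hepi : Epi p := (ModuleCat.epi_iff_surjective p).2 hp
  have hxp : ∀ {Z : ModuleCat.{0} A} (u : Z ⟶ Y), (x • u) ≫ p = 0 := by
    intro Z u
    ext z
    exact (hker _).2 ⟨u z, rfl⟩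
  obtain ⟨h, h0, hs⟩ := exists_homotopy P x hx
  constructor
  · intro H i hi
    have key : ∀ φ : P.complex.X i ⟶ Y', P.complex.d (i + 1) i ≫ φ = 0 →
        ∃ φ' : P.complex.X i ⟶ Y, φ' ≫ p = φ ∧ P.complex.d (i + 1) i ≫ φ' = 0 := by
      intro φ hφ
      have e1 : Projective.factorThru φ p ≫ p = φ := Projective.factorThru_comp _ _
      obtain ⟨ψ, hψ⟩ := factor_smul x hreg p hker
        (P.complex.d (i + 1) i ≫ Projective.factorThru φ p) (by rw [Category.assoc, e1, hφ])
      have hψd : P.complex.d (i + 2) (i + 1) ≫ ψ = 0 := by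
        refine smul_hom_cancel x hreg _ _ ?_
        rw [← Linear.comp_smul, ← hψ]; simp
      obtain ⟨χ, hχ⟩ := (ext_succ_iff P Y i).1 (H (i + 1) (by omega)) ψ hψd
      refine ⟨Projective.factorThru φ p - x • χ, ?_, ?_⟩
      · rw [Preadditive.sub_comp, hxp, e1, sub_zero]
      · rw [Preadditive.comp_sub, hψ, Linear.comp_smul, hχ, sub_self]
    cases i with
    | zero =>
      rw [ext_zero_iff P]
      intro φ hφ
      obtain ⟨φ', rfl, h2⟩ := key φ hφ
      rw [(ext_zero_iff P Y).1 (H 0 (by omega)) φ' h2]; simp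
    | succ i =>
      rw [ext_succ_iff P]
      intro φ hφ
      obtain ⟨φ', rfl, h2⟩ := key φ hφ
      obtain ⟨η, hη⟩ := (ext_succ_iff P Y i).1 (H (i + 1) (by omega)) φ' h2
      exact ⟨η ≫ p, by rw [← Category.assoc, hη]⟩
  · intro H i hi
    cases i with
    | zero => exact ext_zero_of_regular x hx hreg
    | succ i =>
      rw [ext_succ_iff P]
      intro ψ hψ
      have e1 : x • ψ = P.complex.d (i + 1) i ≫ (h i ≫ ψ) := by
        calc x • ψ = (x • 𝟙 _) ≫ ψ := by simp
          _ = _ := by rw [hs, Preadditive.add_comp, Category.assoc, Category.assoc, hψ]; simp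
      have e2 : P.complex.d (i + 1) i ≫ ((h i ≫ ψ) ≫ p) = 0 := by
        rw [← Category.assoc, ← e1, hxp]
      have e3 : ∃ η : P.complex.X i ⟶ Y, η ≫ p = (h i ≫ ψ) ≫ p ∧
          P.complex.d (i + 1) i ≫ η = 0 := by
        cases i with
        | zero =>
          have := (ext_zero_iff P Y').1 (H 0 (by omega)) _ e2
          exact ⟨0, by rw [this]; simp, by simp⟩
        | succ i =>
          obtain ⟨η, hη⟩ := (ext_succ_iff P Y' i).1 (H (i + 1) (by omega)) _ e2
          exact ⟨P.complex.d (i + 1) i ≫ Projective.factorThru η p,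
            by rw [Category.assoc, Projective.factorThru_comp, hη], by simp⟩
      obtain ⟨η, h1, h2⟩ := e3
      obtain ⟨χ, hχ⟩ := factor_smul x hreg p hker (h i ≫ ψ - η)
        (by rw [Preadditive.sub_comp, h1, sub_self])
      refine ⟨χ, smul_hom_cancel x hreg _ _ ?_⟩
      rw [← Linear.comp_smul, ← hχ, Preadditive.comp_sub, h2, sub_zero, e1]

end step

/-- A nonzero map `X ⟶ Y` yields a nonzero class in `Ext^0`. -/
lemma eq_zero_of_ext_zero {X Y : ModuleCat.{0} A}
    (H : Subsingleton (((Ext A (ModuleCat.{0} A) 0).obj (op X)).obj Y)) (f : X ⟶ Y) : f = 0 := by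
  let P := ProjectiveResolution.of X
  let q : P.complex.X 0 ⟶ X := P.π.f 0
  have hq : P.complex.d 1 0 ≫ q = 0 := P.complex_d_comp_π_f_zero
  have h : Epi q := inferInstanceAs (Epi (P.π.f 0))
  have := (ext_zero_iff P Y).1 H (q ≫ f) (by rw [← Category.assoc, hq, Limits.zero_comp])
  rw [← cancel_epi q, this, Limits.comp_zero]
end

section change
variable {A B : Type} [CommRing A] [CommRing B] [IsNoetherianRing A] [IsNoetherianRing B]
  [Algebra A B] (hs : Function.Surjective (algebraMap A B))
  (mA : Ideal A) (mB : Ideal B) (hm : mA.map (algebraMap A B) = mB)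

include hs hm in
/-- Depth is insensitive to a surjective change of rings `A → B`: if some `x ∈ mA` is regular on
`M`, both sides pass to `M/xM`; if there is none, `Hom(A/mA, M)` and `Hom(B/mB, M)` are both
nonzero and both sides fail. -/
lemma extVanish_change (n : ℕ) : ∀ (M : Type) [AddCommGroup M] [Module A M] [Module B M]
    [IsScalarTower A B M] [Module.Finite B M],
    (ExtVanish (ModuleCat.of A (A ⧸ mA)) (ModuleCat.of A M) n ↔
      ExtVanish (ModuleCat.of B (B ⧸ mB)) (ModuleCat.of B M) n) := by
  induction n with
  | zero =>
    intro M _ _ _ _ _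
    simp [ExtVanish]
  | succ n ih =>
    intro M _ _ _ _ _
    have hfin : Module.Finite A M :=
      have : Module.Finite A B := Module.Finite.of_surjective (Algebra.linearMap A B) hs
      Module.Finite.trans B M
    by_cases hex : ∃ x ∈ mA, ∀ y : M, x • y = 0 → y = 0
    · obtain ⟨x, hxm, hx⟩ := hex
      have hxy : ∀ y : M, algebraMap A B x • y = x • y := fun y => algebraMap_smul B x y
      let N : Submodule B M := LinearMap.range (LinearMap.lsmul B M (algebraMap A B x))
      have hN : ∀ y : M, y ∈ N ↔ ∃ z, y = algebraMap A B x • z := by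
        intro y
        constructor
        · rintro ⟨z, rfl⟩; exact ⟨z, rfl⟩
        · rintro ⟨z, rfl⟩; exact ⟨z, rfl⟩
      have h1 := extVanish_succ_iff (X := ModuleCat.of B (B ⧸ mB)) (Y := ModuleCat.of B M)
        (Y' := ModuleCat.of B (M ⧸ N)) (algebraMap A B x)
        (by
          intro y
          obtain ⟨y, rfl⟩ := Ideal.Quotient.mk_surjective y
          refine Ideal.Quotient.eq_zero_iff_mem.2 (Ideal.mul_mem_right _ _ ?_)
          exact hm ▸ Ideal.mem_map_of_mem _ hxm)
        (fun y hy => hx y ((hxy y).symm.trans hy)) (ModuleCat.ofHom N.mkQ)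
        (Submodule.mkQ_surjective N)
        (fun y => (Submodule.Quotient.mk_eq_zero N).trans (hN y)) n
      have h2 := extVanish_succ_iff (X := ModuleCat.of A (A ⧸ mA)) (Y := ModuleCat.of A M)
        (Y' := ModuleCat.of A (M ⧸ N)) x
        (by
          intro y
          obtain ⟨y, rfl⟩ := Ideal.Quotient.mk_surjective y
          exact Ideal.Quotient.eq_zero_iff_mem.2 (Ideal.mul_mem_right _ _ hxm))
        (fun y hy => hx y hy) (ModuleCat.ofHom (N.mkQ.restrictScalars A))
        (Submodule.mkQ_surjective N)
        (fun y => (Submodule.Quotient.mk_eq_zero N).trans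
          ((hN y).trans (by simp only [hxy]))) n
      rw [h1, h2]
      exact ih (M ⧸ N)
    · have hA : ¬ ExtVanish (ModuleCat.of A (A ⧸ mA)) (ModuleCat.of A M) (n + 1) := by
        intro H
        have hsub : Subsingleton ((A ⧸ mA) →ₗ[A] M) :=
          ⟨fun f g => by
            have hf := eq_zero_of_ext_zero (H 0 (by omega)) (ModuleCat.ofHom f)
            have hg := eq_zero_of_ext_zero (H 0 (by omega)) (ModuleCat.ofHom g)
            exact congrArg ModuleCat.Hom.hom (hf.trans hg.symm)⟩
        rw [IsSMulRegular.subsingleton_linearMap_iff] at hsub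
        obtain ⟨r, hr, hreg⟩ := hsub
        rw [Ideal.annihilator_quotient] at hr
        exact hex ⟨r, hr, fun y hy => hreg (by simpa using hy)⟩
      have hB : ¬ ExtVanish (ModuleCat.of B (B ⧸ mB)) (ModuleCat.of B M) (n + 1) := by
        intro H
        have hsub : Subsingleton ((B ⧸ mB) →ₗ[B] M) :=
          ⟨fun f g => by
            have hf := eq_zero_of_ext_zero (H 0 (by omega)) (ModuleCat.ofHom f)
            have hg := eq_zero_of_ext_zero (H 0 (by omega)) (ModuleCat.ofHom g)
            exact congrArg ModuleCat.Hom.hom (hf.trans hg.symm)⟩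
        rw [IsSMulRegular.subsingleton_linearMap_iff] at hsub
        obtain ⟨r, hr, hreg⟩ := hsub
        rw [Ideal.annihilator_quotient, ← hm, Ideal.mem_map_iff_of_surjective _ hs] at hr
        obtain ⟨a, ha, rfl⟩ := hr
        exact hex ⟨a, ha, fun y hy => hreg (by simpa using hy)⟩
      exact iff_of_false hA hB
end change
end


/-! ### Homogeneous components in graded free modules -/

noncomputable section
section grading
variable {K : Type} [Field K] {σ τ : Type}

lemma homogComp_iff (e : ℤ) (p : MvPoly K σ) :
    HomogComp K σ e p ↔ ∀ m, coeff m p ≠ 0 → (m.degree : ℤ) = e := by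
  unfold HomogComp
  split_ifs with h
  · rw [mem_homogeneousSubmodule]
    lift e to ℕ using h
    simp only [IsHomogeneous, IsWeightedHomogeneous, Int.toNat_natCast, Nat.cast_inj,
      Finsupp.degree_eq_weight_one]
    rfl
  · constructor
    · rintro rfl m hm; simp at hm
    · intro H
      ext m
      by_contra hm
      have := H m (by simpa using hm)
      omega

/-- The degree-`e` component of a polynomial, for `e : ℤ` (zero for negative `e`). -/
def hc (e : ℤ) : MvPoly K σ →ₗ[K] MvPoly K σ :=
  if 0 ≤ e then homogeneousComponent e.toNat else 0

lemma coeff_hc (e : ℤ) (p : MvPoly K σ) (m : σ →₀ ℕ) :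
    coeff m (hc e p) = if (m.degree : ℤ) = e then coeff m p else 0 := by
  unfold hc
  split_ifs with h h' h'
  · rw [coeff_homogeneousComponent, if_pos (by omega)]
  · rw [coeff_homogeneousComponent, if_neg (by omega)]
  · omega
  · simp

lemma hc_homog (e : ℤ) (p : MvPoly K σ) : HomogComp K σ e (hc e p) := by
  rw [homogComp_iff]
  intro m hm
  rw [coeff_hc] at hm
  by_contra h
  simp [h] at hm

lemma hc_eq {e : ℤ} {p : MvPoly K σ} (h : HomogComp K σ e p) : hc e p = p := by
  rw [homogComp_iff] at h
  ext m
  rw [coeff_hc]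
  split_ifs with hm
  · rfl
  · by_contra h'
    exact hm (h m (Ne.symm h'))

lemma hc_ne {e e' : ℤ} {p : MvPoly K σ} (h : HomogComp K σ e p) (hne : e' ≠ e) :
    hc e' p = 0 := by
  rw [homogComp_iff] at h
  ext m
  rw [coeff_hc]
  split_ifs with hm
  · rw [coeff_zero]
    by_contra h'
    exact hne (hm ▸ h m h')
  · simp

lemma hc_mul {d : ℤ} {r : MvPoly K σ} (h : HomogComp K σ d r) (e : ℤ) (p : MvPoly K σ) :
    hc e (p * r) = hc (e - d) p * r := by
  classical
  rw [homogComp_iff] at h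
  ext m
  rw [coeff_hc, coeff_mul, coeff_mul]
  have : ∀ x ∈ Finset.HasAntidiagonal.antidiagonal m, coeff x.1 (hc (e - d) p) * coeff x.2 r =
      if (m.degree : ℤ) = e then coeff x.1 p * coeff x.2 r else 0 := by
    rintro ⟨a, b⟩ hab
    rw [Finset.HasAntidiagonal.mem_antidiagonal] at hab
    simp only at hab ⊢
    by_cases hb : coeff b r = 0
    · simp [hb]
    · have h1 := h b hb
      have h2 : m.degree = a.degree + b.degree := by rw [← hab, map_add]
      rw [coeff_hc]
      by_cases hm : (m.degree : ℤ) = e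
      · rw [if_pos hm, if_pos (by omega)]
      · rw [if_neg hm, if_neg (by omega), zero_mul]
  rw [Finset.sum_congr rfl this]
  split_ifs <;> simp

lemma hc_neg {e : ℤ} (h : e < 0) (p : MvPoly K σ) : hc e p = 0 := by
  unfold hc
  rw [if_neg (by omega)]; rfl

lemma hc_sum (p : MvPoly K σ) (N : ℕ) (hN : p.totalDegree < N) :
    ∑ k ∈ Finset.range N, hc (k : ℤ) p = p := by
  ext m
  rw [coeff_sum]
  simp only [coeff_hc, Nat.cast_inj]
  rw [Finset.sum_ite_eq]
  split_ifs with h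
  · rfl
  · by_contra hm
    have h1 := le_totalDegree (p := p) (s := m) (by
      rw [mem_support_iff]; exact Ne.symm hm)
    apply h
    rw [Finset.mem_range]
    refine lt_of_le_of_lt ?_ hN
    exact h1

lemma hc_map (φ : MvPoly K τ →ₗ[K] MvPoly K σ)
    (hφ : ∀ e p, HomogComp K τ e p → HomogComp K σ e (φ p)) (e : ℤ) (p : MvPoly K τ) :
    φ (hc e p) = hc e (φ p) := by
  by_cases he : 0 ≤ e
  · lift e to ℕ using he
    conv_rhs => rw [← hc_sum p (p.totalDegree + e + 1) (by omega), map_sum, map_sum]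
    rw [Finset.sum_eq_single e]
    · rw [hc_eq (hφ _ _ (hc_homog _ _))]
    · intro b _ hb
      exact hc_ne (hφ _ _ (hc_homog _ _)) (by exact_mod_cast hb.symm)
    · intro h
      exact absurd (Finset.mem_range.2 (by omega)) h
  · rw [hc_neg (by omega), hc_neg (by omega), map_zero]

/-- The degree-`e` component of an element of `⊕_j R(-dg j)`. -/
def vc {m : ℕ} (dg : Fin m → ℤ) (e : ℤ) : (Fin m → MvPoly K σ) →ₗ[K] (Fin m → MvPoly K σ) :=
  LinearMap.pi fun j => hc (e - dg j) ∘ₗ LinearMap.proj j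

lemma vc_apply {m : ℕ} (dg : Fin m → ℤ) (e : ℤ) (v : Fin m → MvPoly K σ) (j : Fin m) :
    vc dg e v j = hc (e - dg j) (v j) := rfl

lemma isHomogVec_iff {m : ℕ} (dg : Fin m → ℤ) (e : ℤ) (v : Fin m → MvPoly K σ) :
    IsHomogVec K σ dg e v ↔ vc dg e v = v := by
  constructor
  · intro h
    funext j
    exact hc_eq (h j)
  · intro h j
    rw [← h]
    exact hc_homog _ _

lemma vc_homog {m : ℕ} (dg : Fin m → ℤ) (e : ℤ) (v : Fin m → MvPoly K σ) :
    IsHomogVec K σ dg e (vc dg e v) := fun _ => hc_homog _ _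

lemma vc_smul {m : ℕ} (dg : Fin m → ℤ) {d : ℤ} {r : MvPoly K σ} (h : HomogComp K σ d r)
    (e : ℤ) (v : Fin m → MvPoly K σ) : vc dg e (r • v) = r • vc dg (e - d) v := by
  funext j
  simp only [vc_apply, Pi.smul_apply, smul_eq_mul]
  rw [mul_comm, hc_mul h, mul_comm, sub_right_comm]

lemma vc_smul_col {m : ℕ} (dg : Fin m → ℤ) {d : ℤ} {c : Fin m → MvPoly K σ}
    (h : IsHomogVec K σ dg d c) (e : ℤ) (p : MvPoly K σ) :
    vc dg e (p • c) = hc (e - d) p • c := by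
  funext j
  simp only [vc_apply, Pi.smul_apply, smul_eq_mul]
  rw [hc_mul (h j), show e - dg j - (d - dg j) = e - d by ring]

lemma vc_sum {m : ℕ} (dg : Fin m → ℤ) (v : Fin m → MvPoly K σ) :
    ∃ T : Finset ℤ, ∑ e ∈ T, vc dg e v = v := by
  classical
  have hex : ∀ (p : MvPoly K σ) (d : ℤ), ∃ T : Finset ℤ, ∀ T' : Finset ℤ, T ⊆ T' →
      ∑ e ∈ T', hc (e - d) p = p := by
    intro p d
    refine ⟨p.support.image fun m => (m.degree : ℤ) + d, fun T' hT => ?_⟩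
    ext m
    rw [coeff_sum]
    simp only [coeff_hc]
    have : ∀ e : ℤ, ((m.degree : ℤ) = e - d) ↔ (m.degree : ℤ) + d = e := fun e => by omega
    simp only [this]
    rw [Finset.sum_ite_eq]
    split_ifs with h
    · rfl
    · by_contra hm
      exact h (hT (Finset.mem_image_of_mem _ (mem_support_iff.2 (Ne.symm hm))))
  choose T hT using fun j => hex (v j) (dg j)
  refine ⟨Finset.univ.biUnion T, ?_⟩
  funext j
  rw [Finset.sum_apply]
  exact hT j _ (Finset.subset_biUnion_of_mem T (Finset.mem_univ j))

lemma vc_bounded {m : ℕ} (dg : Fin m → ℤ) : ∃ N : ℤ, ∀ e < N, ∀ v : Fin m → MvPoly K σ,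
    vc dg e v = 0 := by
  obtain ⟨N, hN⟩ := (Set.finite_range dg).bddBelow
  refine ⟨N, fun e he v => ?_⟩
  funext j
  have := hN (Set.mem_range_self j)
  exact hc_neg (by omega) _

/-- Graded Nakayama for an element `θ` of degree one and an abstract family of component maps `c`,
bounded below in degree: if `N ⊆ P + θN` with `P` a graded submodule, then `N ⊆ P`. -/
lemma nakayama {S M : Type} [CommRing S] [AddCommGroup M] [Module S M] (θ : S)
    (c : ℤ → M → M) (hb : ∃ N : ℤ, ∀ e < N, ∀ v, c e v = 0)
    (P : Submodule S M) (hsum : ∀ v, (∀ e, c e v ∈ P) → v ∈ P)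
    (hadd : ∀ e u w, c e (u + θ • w) = c e u + θ • c (e - 1) w)
    (hP : ∀ e, ∀ v ∈ P, c e v ∈ P) (N : Set M)
    (hN : ∀ v ∈ N, ∃ u ∈ P, ∃ w ∈ N, v = u + θ • w) : ∀ v ∈ N, v ∈ P := by
  obtain ⟨B, hB⟩ := hb
  have key : ∀ k : ℕ, ∀ e : ℤ, e < B + k → ∀ v ∈ N, c e v ∈ P := by
    intro k
    induction k with
    | zero =>
      intro e he v _
      rw [hB e (by simpa using he)]
      exact P.zero_mem
    | succ k ih =>
      intro e he v hv
      obtain ⟨u, hu, w, hw, rfl⟩ := hN v hv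
      rw [hadd]
      exact P.add_mem (hP e u hu) (P.smul_mem _ (ih (e - 1) (by push_cast at he; omega) w hw))
  intro v hv
  refine hsum v fun e => key (e - B + 1).toNat e (by omega) v hv

/-- A matrix whose `j`-th column is homogeneous of degree `dk j` is a degree preserving map. -/
lemma lc_graded {k m : ℕ} {dk : Fin k → ℤ} {dm : Fin m → ℤ}
    {c : Fin k → Fin m → MvPoly K σ} (hcol : ∀ j, IsHomogVec K σ dm (dk j) (c j)) (e : ℤ)
    (v : Fin k → MvPoly K σ) :
    Fintype.linearCombination (MvPoly K σ) c (vc dk e v) =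
      vc dm e (Fintype.linearCombination (MvPoly K σ) c v) := by
  rw [Fintype.linearCombination_apply, Fintype.linearCombination_apply, map_sum]
  refine Finset.sum_congr rfl fun j _ => ?_
  rw [vc_smul_col dm (hcol j)]
  rfl

lemma single_homog {k : ℕ} (dk : Fin k → ℤ) (j : Fin k) :
    IsHomogVec K σ dk (dk j) (Pi.single j (1 : MvPoly K σ)) := by
  classical
  intro i
  rw [homogComp_iff]
  intro m hm
  by_cases h : i = j
  · subst h
    rw [Pi.single_eq_same, coeff_one] at hm
    have : 0 = m := by by_contra h'; simp [h'] at hm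
    simp [← this]
  · rw [Pi.single_eq_of_ne h] at hm
    simp at hm

lemma lc_single {S M : Type} [CommRing S] [AddCommGroup M] [Module S M] {k : ℕ}
    (f : (Fin k → S) →ₗ[S] M) (v : Fin k → S) :
    f v = ∑ j, v j • f (Pi.single j 1) := by
  conv_lhs => rw [pi_eq_sum_univ' v, map_sum]
  refine Finset.sum_congr rfl fun j _ => ?_
  rw [map_smul]

end grading
end


/-! ### Lifting and cutting resolutions along a hyperplane section -/

noncomputable section
section cut
variable {K : Type} [Field K] {σ τ : Type}

/-- The data of a hyperplane section: `π : K[τ] → K[σ]` is a graded surjection with graded section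
`ι`, its kernel is generated by the linear form `θ`, which is regular modulo the homogeneous
ideal `J`, and `I` is the image of `J` (so that `K[σ]/I = K[τ]/(J + θ)`). -/
structure Cut (π : MvPoly K τ →ₐ[K] MvPoly K σ) (ι : MvPoly K σ →ₐ[K] MvPoly K τ)
    (θ : MvPoly K τ) (J : Ideal (MvPoly K τ)) (I : Ideal (MvPoly K σ)) : Prop where
  sect : ∀ p, π (ι p) = p
  hπ : ∀ e p, HomogComp K τ e p → HomogComp K σ e (π p)
  hι : ∀ e p, HomogComp K σ e p → HomogComp K τ e (ι p)
  hθ : HomogComp K τ 1 θ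
  ne : θ ≠ 0
  ker : ∀ p, π p = 0 ↔ ∃ q, p = θ * q
  reg : ∀ p, θ * p ∈ J → p ∈ J
  hI : ∀ p, π p ∈ I ↔ ∃ q, p - θ * q ∈ J
  hom : ∀ e, ∀ p ∈ J, hc e p ∈ J
  max : ∀ t, π (X t) ∈ maxIdeal K σ
  max' : ∀ s, ι (X s) ∈ maxIdeal K τ

lemma quotComp_of_homog {ρ : Type} {A : Ideal (MvPoly K ρ)} {e : ℤ} {p : MvPoly K ρ}
    (h : HomogComp K ρ e p) :
    Ideal.Quotient.mk A p ∈ QuotComp K ρ A e := by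
  unfold HomogComp at h
  unfold QuotComp
  split_ifs at h ⊢ with he
  · exact ⟨p, h, rfl⟩
  · rw [h]; simp

lemma exists_of_quotComp {ρ : Type} {A : Ideal (MvPoly K ρ)} {e : ℤ} {q : MvPoly K ρ ⧸ A}
    (h : q ∈ QuotComp K ρ A e) :
    ∃ p, HomogComp K ρ e p ∧ Ideal.Quotient.mk A p = q := by
  unfold QuotComp at h
  unfold HomogComp
  split_ifs at h ⊢ with he
  · obtain ⟨p, hp, rfl⟩ := h
    exact ⟨p, hp, rfl⟩
  · exact ⟨0, rfl, by simpa using h.symm⟩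

namespace Cut
variable {π : MvPoly K τ →ₐ[K] MvPoly K σ} {ι : MvPoly K σ →ₐ[K] MvPoly K τ}
    {θ : MvPoly K τ} {J : Ideal (MvPoly K τ)} {I : Ideal (MvPoly K σ)} (H : Cut π ι θ J I)
include H

lemma lift_vec {m : ℕ} (u : Fin m → MvPoly K σ) : ∃ v : Fin m → MvPoly K τ, π ∘ v = u :=
  ⟨ι ∘ u, funext fun j => H.sect (u j)⟩

lemma ker_vec {m : ℕ} (v : Fin m → MvPoly K τ) (h : π ∘ v = 0) : ∃ w, v = θ • w := by
  choose w hw using fun j => (H.ker (v j)).1 (congrFun h j)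
  exact ⟨w, funext hw⟩

lemma pi_theta : π θ = 0 := (H.ker θ).2 ⟨1, by simp⟩

lemma pi_smul {m : ℕ} (w : Fin m → MvPoly K τ) : π ∘ (θ • w) = 0 := by
  funext j
  simp [H.pi_theta]

lemma pi_sub {m : ℕ} (v w : Fin m → MvPoly K τ) : π ∘ (v - θ • w) = π ∘ v := by
  funext j
  simp [H.pi_theta]

lemma pi_vc {m : ℕ} (dg : Fin m → ℤ) (e : ℤ) (v : Fin m → MvPoly K τ) :
    π ∘ (vc dg e v) = vc dg e (π ∘ v) := by
  funext j
  exact hc_map π.toLinearMap H.hπ _ _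

lemma regQ (c : MvPoly K τ ⧸ J) (h : θ • c = 0) : c = 0 := by
  obtain ⟨p, rfl⟩ := Ideal.Quotient.mk_surjective c
  exact Ideal.Quotient.eq_zero_iff_mem.2 (H.reg p (Ideal.Quotient.eq_zero_iff_mem.1 h))

lemma regV {m : ℕ} (c : Fin m → MvPoly K τ) (h : θ • c = 0) : c = 0 :=
  (smul_eq_zero.1 h).resolve_left H.ne

/-- Lift of one step of a resolution.  Here `g` is the previous map upstairs, with `θ`-torsion-free
target, `kb` is the kernel of its reduction modulo `θ`, and `hP` says that reduction maps `ker g`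
onto `kb`.  A graded map `fb` with image `kb` then lifts to a graded map `f` with image `ker g`
(surjectivity onto `ker g` is graded Nakayama), and `f` satisfies the analogue of `hP`, so the
construction can be iterated. -/
lemma lift_stage {k m : ℕ} (dk : Fin k → ℤ) (dm : Fin m → ℤ) {C : Type} [AddCommGroup C]
    [Module (MvPoly K τ) C] (g : (Fin m → MvPoly K τ) →ₗ[MvPoly K τ] C)
    (hcl : ∀ e v, g v = 0 → g (vc dm e v) = 0)
    (hC : ∀ c : C, θ • c = 0 → c = 0)
    (kb : Set (Fin m → MvPoly K σ))
    (hP : ∀ v, π ∘ v ∈ kb → ∃ z, g (v - θ • z) = 0)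
    (hQ : ∀ v, g v = 0 → π ∘ v ∈ kb)
    (fb : (Fin k → MvPoly K σ) →ₗ[MvPoly K σ] (Fin m → MvPoly K σ))
    (hgr : ∀ e v, IsHomogVec K σ dk e v → IsHomogVec K σ dm e (fb v))
    (hex : ∀ u, u ∈ kb ↔ ∃ a, fb a = u) :
    ∃ f : (Fin k → MvPoly K τ) →ₗ[MvPoly K τ] (Fin m → MvPoly K τ),
      (∀ e v, f (vc dk e v) = vc dm e (f v)) ∧ (∀ v, fb (π ∘ v) = π ∘ (f v)) ∧
      (∀ u, g u = 0 ↔ ∃ a, f a = u) ∧ (∀ v, fb (π ∘ v) = 0 → ∃ z, f (v - θ • z) = 0) := by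
  -- homogeneous lifts of the columns of `fb` lying in `ker g`
  have hcol : ∀ j, ∃ c : Fin m → MvPoly K τ, IsHomogVec K τ dm (dk j) c ∧ g c = 0 ∧
      π ∘ c = fb (Pi.single j 1) := by
    intro j
    obtain ⟨u, hu⟩ := H.lift_vec (fb (Pi.single j 1))
    obtain ⟨z, hz⟩ := hP u (by rw [hu]; exact (hex _).2 ⟨_, rfl⟩)
    refine ⟨vc dm (dk j) (u - θ • z), vc_homog _ _ _, hcl _ _ hz, ?_⟩
    rw [H.pi_vc, H.pi_sub, hu]
    exact (isHomogVec_iff _ _ _).1 (hgr _ _ (single_homog dk j))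
  choose c hc1 hc2 hc3 using hcol
  have hbar : ∀ v, fb (π ∘ v) = π ∘ (Fintype.linearCombination (MvPoly K τ) c v) := by
    intro v
    rw [lc_single fb, Fintype.linearCombination_apply]
    funext i
    simp only [← hc3, Finset.sum_apply, Pi.smul_apply, Function.comp_apply, smul_eq_mul, map_sum,
      map_mul]
  have hg0 : ∀ a, g (Fintype.linearCombination (MvPoly K τ) c a) = 0 := by
    intro a
    rw [Fintype.linearCombination_apply, map_sum]
    exact Finset.sum_eq_zero fun j _ => by rw [map_smul, hc2, smul_zero]
  have hex' : ∀ u, g u = 0 ↔ ∃ a, Fintype.linearCombination (MvPoly K τ) c a = u := by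
    intro u
    constructor
    · refine nakayama θ (fun e v => vc dm e v) (vc_bounded dm)
        (LinearMap.range (Fintype.linearCombination (MvPoly K τ) c)) ?_ ?_ ?_ {v | g v = 0} ?_ u
      · intro v hv
        obtain ⟨T, hT⟩ := vc_sum dm v
        rw [← hT]
        exact Submodule.sum_mem _ fun e _ => hv e
      · intro e u w
        simp only [map_add, vc_smul dm H.hθ]
      · rintro e _ ⟨a, rfl⟩
        exact ⟨vc dk e a, lc_graded hc1 e a⟩
      · intro v hv
        obtain ⟨a, ha⟩ := (hex _).1 (hQ v hv)
        obtain ⟨b, rfl⟩ := H.lift_vec a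
        rw [hbar] at ha
        obtain ⟨w, hw⟩ := H.ker_vec (v - Fintype.linearCombination (MvPoly K τ) c b) (by
          funext i
          have := congrFun ha i
          simp only [Function.comp_apply] at this
          simp [this])
        refine ⟨_, ⟨b, rfl⟩, w, ?_, ?_⟩
        · apply hC
          rw [← map_smul, ← hw, map_sub, hg0, hv, sub_zero]
        · rw [← hw]; abel
    · rintro ⟨a, rfl⟩
      exact hg0 a
  refine ⟨Fintype.linearCombination (MvPoly K τ) c, lc_graded hc1, hbar, hex', ?_⟩
  intro v hv
  rw [hbar] at hv
  obtain ⟨w, hw⟩ := H.ker_vec _ hv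
  have : g w = 0 := by
    apply hC
    rw [← map_smul, ← hw, hg0]
  obtain ⟨z, rfl⟩ := (hex' w).1 this
  exact ⟨z, by rw [map_sub, map_smul, hw, sub_self]⟩

/-- A graded free resolution of `K[σ]/I` lifts to one of `K[τ]/J` with the same ranks and
twists. -/
lemma resBound_lift (s : ℤ) (hR : ResBound K σ I s) : ResBound K τ J s := by
  obtain ⟨F, hF⟩ := hR
  -- the augmentation is lifted by lifting homogeneous representatives of the images of the basis
  choose r hr1 hr2 using fun j => exists_of_quotComp (F.aug_graded _ _ (single_homog (F.dg 0) j))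
  let a : (Fin (F.rk 0) → MvPoly K τ) →ₗ[MvPoly K τ] MvPoly K τ :=
    Fintype.linearCombination (MvPoly K τ) fun j => ι (r j)
  have ha : ∀ e v, a (vc (F.dg 0) e v) = hc e (a v) := by
    intro e v
    simp only [a, Fintype.linearCombination_apply, map_sum, smul_eq_mul, vc_apply]
    refine Finset.sum_congr rfl fun j _ => ?_
    rw [hc_mul (H.hι _ _ (hr1 j))]
  have hbar : ∀ v, F.aug (π ∘ v) = Ideal.Quotient.mk I (π (a v)) := by
    intro v
    rw [lc_single F.aug]
    simp only [a, Fintype.linearCombination_apply, map_sum, smul_eq_mul, map_mul, H.sect, hr2]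
    rfl
  let aug : (Fin (F.rk 0) → MvPoly K τ) →ₗ[MvPoly K τ] (MvPoly K τ ⧸ J) :=
    (Submodule.mkQ J) ∘ₗ a
  have aug0 : ∀ v, aug v = 0 ↔ a v ∈ J := fun v => Ideal.Quotient.eq_zero_iff_mem
  have hsurj : ∀ p : MvPoly K τ, ∃ v, a v - p ∈ J := by
    have : ∀ p : MvPoly K τ, p ∈ LinearMap.range a ⊔ J := by
      intro p
      refine nakayama θ (fun e v => hc e v) ⟨0, fun e he v => hc_neg he v⟩
        (LinearMap.range a ⊔ J) ?_ ?_ ?_ Set.univ ?_ p trivial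
      · intro v hv
        rw [← hc_sum v _ (Nat.lt_succ_self _)]
        exact Submodule.sum_mem _ fun e _ => hv e
      · intro e u w
        simp only [map_add, smul_eq_mul]
        rw [mul_comm θ w, hc_mul H.hθ, mul_comm]
      · intro e v hv
        obtain ⟨_, ⟨b, rfl⟩, j, hj, rfl⟩ := Submodule.mem_sup.1 hv
        rw [map_add, ← ha]
        exact Submodule.add_mem_sup ⟨_, rfl⟩ (H.hom e j hj)
      · intro v _
        obtain ⟨b, hb⟩ := F.aug_surj (Ideal.Quotient.mk I (π v))
        obtain ⟨b, rfl⟩ := H.lift_vec b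
        rw [hbar, Ideal.Quotient.eq, ← map_sub, H.hI] at hb
        obtain ⟨q, hq⟩ := hb
        refine ⟨a b + -(a b - v - θ * q), Submodule.add_mem_sup ⟨b, rfl⟩ (J.neg_mem hq), -q,
          trivial, ?_⟩
        rw [smul_eq_mul]; ring
    intro p
    obtain ⟨_, ⟨v, rfl⟩, j, hj, rfl⟩ := Submodule.mem_sup.1 (this p)
    exact ⟨v, by rw [sub_add_cancel_left]; exact J.neg_mem hj⟩
  have aug_surj : Function.Surjective aug := by
    intro q
    obtain ⟨p, rfl⟩ := Ideal.Quotient.mk_surjective q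
    obtain ⟨v, hv⟩ := hsurj p
    exact ⟨v, Ideal.Quotient.eq.2 hv⟩
  -- the differentials are lifted recursively; `Good` is the invariant `lift_stage` needs next
  let Good (i : ℕ) (f : (Fin (F.rk (i + 1)) → MvPoly K τ) →ₗ[MvPoly K τ]
      (Fin (F.rk i) → MvPoly K τ)) : Prop :=
    (∀ e v, f (vc (F.dg (i + 1)) e v) = vc (F.dg i) e (f v)) ∧
    (∀ v, F.dmap i (π ∘ v) = π ∘ (f v)) ∧
    (∀ v, F.dmap i (π ∘ v) = 0 → ∃ z, f (v - θ • z) = 0)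
  have start : ∃ f : {f // Good 0 f}, ∀ u, aug u = 0 ↔ ∃ a, f.1 a = u := by
    obtain ⟨f, h1, h2, h3, h4⟩ := H.lift_stage (F.dg 1) (F.dg 0) aug
      (fun e v hv => by
        rw [aug0] at hv ⊢
        rw [ha]; exact H.hom _ _ hv)
      H.regQ {u | F.aug u = 0}
      (fun v hv => by
        rw [Set.mem_ofPred_eq, hbar, Ideal.Quotient.eq_zero_iff_mem, H.hI] at hv
        obtain ⟨q, hq⟩ := hv
        obtain ⟨z, hz⟩ := hsurj q
        refine ⟨z, (aug0 _).2 ?_⟩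
        rw [map_sub, map_smul, smul_eq_mul]
        have := J.sub_mem hq (J.mul_mem_left θ hz)
        convert this using 1
        ring)
      (fun v hv => by
        rw [Set.mem_ofPred_eq, hbar, Ideal.Quotient.eq_zero_iff_mem, H.hI]
        exact ⟨0, by simpa using (aug0 v).1 hv⟩)
      (F.dmap 0) (F.graded 0) (fun u => F.exact0 u)
    exact ⟨⟨f, h1, h2, h4⟩, h3⟩
  have next : ∀ i (f : {f // Good i f}), ∃ f' : {f // Good (i + 1) f},
      ∀ u, f.1 u = 0 ↔ ∃ a, f'.1 a = u := by
    rintro i ⟨f, g1, g2, g3⟩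
    obtain ⟨f', h1, h2, h3, h4⟩ := H.lift_stage (F.dg (i + 2)) (F.dg (i + 1)) f
      (fun e v hv => by rw [g1, hv, map_zero])
      H.regV {u | F.dmap i u = 0} g3
      (fun v hv => by
        rw [Set.mem_ofPred_eq, g2, hv]
        funext j; simp)
      (F.dmap (i + 1)) (F.graded (i + 1)) (fun u => F.exactS i u)
    exact ⟨⟨f', h1, h2, h4⟩, h3⟩
  choose f0 hf0 using start
  choose nx hnx using next
  let D : (i : ℕ) → {f // Good i f} := fun i => Nat.rec f0 (fun i f => nx i f) i
  refine ⟨{ rk := F.rk, dg := F.dg, dmap := fun i => (D i).1, aug := aug, aug_surj := aug_surj,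
            exact0 := hf0, exactS := fun i => hnx i (D i), graded := ?_, aug_graded := ?_ }, hF⟩
  · intro i e v hv
    rw [isHomogVec_iff] at hv ⊢
    rw [← (D i).2.1, hv]
  · intro e v hv
    rw [isHomogVec_iff] at hv
    refine quotComp_of_homog ?_
    rw [← hv, ha]
    exact hc_homog _ _

/-- Reduction modulo `θ` preserves exactness at a spot followed by two further maps of an exact
sequence with `θ`-torsion-free terms. -/
lemma bar_exact {k m l : ℕ} {D : Type} [AddCommGroup D] [Module (MvPoly K τ) D]
    (f : (Fin k → MvPoly K τ) →ₗ[MvPoly K τ] (Fin m → MvPoly K τ))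
    (g : (Fin m → MvPoly K τ) →ₗ[MvPoly K τ] (Fin l → MvPoly K τ))
    (h : (Fin l → MvPoly K τ) →ₗ[MvPoly K τ] D) (hD : ∀ d : D, θ • d = 0 → d = 0)
    (hfg : Function.Exact f g) (hgh : Function.Exact g h)
    (fb : (Fin k → MvPoly K σ) →ₗ[MvPoly K σ] (Fin m → MvPoly K σ))
    (gb : (Fin m → MvPoly K σ) →ₗ[MvPoly K σ] (Fin l → MvPoly K σ))
    (hf : ∀ v, fb (π ∘ v) = π ∘ (f v)) (hg : ∀ v, gb (π ∘ v) = π ∘ (g v)) :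
    Function.Exact fb gb := by
  intro u
  obtain ⟨v, rfl⟩ := H.lift_vec u
  constructor
  · intro hv
    rw [hg] at hv
    obtain ⟨w, hw⟩ := H.ker_vec _ hv
    have : h w = 0 := by
      apply hD
      rw [← map_smul, ← hw]
      exact (hgh _).2 ⟨v, rfl⟩
    obtain ⟨z, rfl⟩ := (hgh w).1 this
    obtain ⟨a, ha⟩ := (hfg (v - θ • z)).1 (by rw [map_sub, map_smul, hw, sub_self])
    exact ⟨π ∘ a, by rw [hf, ha, H.pi_sub]⟩
  · rintro ⟨a, ha⟩
    obtain ⟨a, rfl⟩ := H.lift_vec a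
    rw [← ha, hf, hg, (hfg _).2 ⟨a, rfl⟩]
    funext j
    simp

/-- A graded free resolution of `K[τ]/J` reduces modulo `θ` to one of `K[σ]/I`. -/
lemma resBound_cut (s : ℤ) (hR : ResBound K τ J s) : ResBound K σ I s := by
  obtain ⟨F, hF⟩ := hR
  have hJI : ∀ p ∈ J, Ideal.Quotient.mk I (π p) = 0 := fun p hp =>
    Ideal.Quotient.eq_zero_iff_mem.2 ((H.hI p).2 ⟨0, by simpa using hp⟩)
  let q : MvPoly K τ ⧸ J →+* MvPoly K σ ⧸ I :=
    Ideal.Quotient.lift J ((Ideal.Quotient.mk I).comp π.toRingHom) hJI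
  have hq : ∀ p, q (Ideal.Quotient.mk J p) = Ideal.Quotient.mk I (π p) := fun p => rfl
  have hqs : ∀ (p : MvPoly K τ) (c : MvPoly K τ ⧸ J), q (p • c) = π p • q c := by
    intro p c
    obtain ⟨c, rfl⟩ := Ideal.Quotient.mk_surjective c
    change q (Ideal.Quotient.mk J (p * c)) = _
    rw [hq, map_mul]; rfl
  let aug : (Fin (F.rk 0) → MvPoly K σ) →ₗ[MvPoly K σ] (MvPoly K σ ⧸ I) :=
    Fintype.linearCombination (MvPoly K σ) fun j => q (F.aug (Pi.single j 1))
  have haug : ∀ v, aug (π ∘ v) = q (F.aug v) := by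
    intro v
    rw [lc_single F.aug, map_sum]
    simp only [aug, Fintype.linearCombination_apply, hqs]
    rfl
  let D (i : ℕ) : (Fin (F.rk (i + 1)) → MvPoly K σ) →ₗ[MvPoly K σ] (Fin (F.rk i) → MvPoly K σ) :=
    Fintype.linearCombination (MvPoly K σ) fun j => π ∘ (F.dmap i (Pi.single j 1))
  have hD : ∀ i v, D i (π ∘ v) = π ∘ (F.dmap i v) := by
    intro i v
    rw [lc_single (F.dmap i)]
    simp only [D, Fintype.linearCombination_apply]
    funext t
    simp
  have hιv : ∀ {m : ℕ} (dg : Fin m → ℤ) e (v : Fin m → MvPoly K σ),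
      IsHomogVec K σ dg e v → IsHomogVec K τ dg e (ι ∘ v) := fun dg e v hv j => H.hι _ _ (hv j)
  have hπι : ∀ {m : ℕ} (v : Fin m → MvPoly K σ), π ∘ (ι ∘ v) = v :=
    fun v => funext fun j => H.sect _
  refine ⟨{ rk := F.rk, dg := F.dg, dmap := D, aug := aug, aug_surj := ?_,
            exact0 := ?_, exactS := ?_, graded := ?_, aug_graded := ?_ }, hF⟩
  · intro c
    obtain ⟨p, rfl⟩ := Ideal.Quotient.mk_surjective c
    obtain ⟨v, hv⟩ := F.aug_surj (Ideal.Quotient.mk J (ι p))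
    exact ⟨π ∘ v, by rw [haug, hv, hq, H.sect]⟩
  · intro u
    obtain ⟨v, rfl⟩ := H.lift_vec u
    constructor
    · intro hv
      rw [haug] at hv
      obtain ⟨p, hp⟩ := Ideal.Quotient.mk_surjective (F.aug v)
      rw [← hp, hq, Ideal.Quotient.eq_zero_iff_mem, H.hI] at hv
      obtain ⟨y, hy⟩ := hv
      obtain ⟨w, hw⟩ := F.aug_surj (Ideal.Quotient.mk J y)
      obtain ⟨a, ha⟩ := (F.exact0 (v - θ • w)).1 (by
        rw [map_sub, map_smul, ← hp, hw]
        exact Ideal.Quotient.eq_zero_iff_mem.2 hy)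
      exact ⟨π ∘ a, by rw [hD, ha, H.pi_sub]⟩
    · rintro ⟨a, ha⟩
      obtain ⟨a, rfl⟩ := H.lift_vec a
      rw [← ha, hD, haug, (F.exact0 _).2 ⟨a, rfl⟩, map_zero]
  · intro i
    cases i with
    | zero => exact H.bar_exact _ _ F.aug H.regQ (F.exactS 0) F.exact0 _ _ (hD 1) (hD 0)
    | succ i =>
      exact H.bar_exact _ _ _ H.regV (F.exactS (i + 1)) (F.exactS i) _ _ (hD (i + 2)) (hD (i + 1))
  · intro i e v hv
    rw [← hπι v, hD]
    exact fun j => H.hπ _ _ (F.graded i e _ (hιv _ _ _ hv) j)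
  · intro e v hv
    rw [← hπι v, haug]
    obtain ⟨p, hp, h2⟩ := exists_of_quotComp (F.aug_graded e _ (hιv _ _ _ hv))
    rw [← h2, hq]
    exact quotComp_of_homog (H.hπ _ _ hp)

end Cut
end cut
end


/-! ### Depth and regularity under a hyperplane section -/


noncomputable section
section depth
variable {K : Type} [Field K] {σ τ : Type}

lemma le_depthQ_iff (I : Ideal (MvPoly K σ)) (n : ℕ) : (n : ℕ∞) ≤ depthQ K σ I ↔
    ExtVanish (ModuleCat.of (MvPoly K σ) (MvPoly K σ ⧸ maxIdeal K σ))
      (ModuleCat.of (MvPoly K σ) (MvPoly K σ ⧸ I)) n := by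
  unfold depthQ ExtVanish
  rw [le_sInf_iff]
  constructor
  · intro h i hi
    rw [← not_nontrivial_iff_subsingleton]
    intro hn
    have := h i ⟨i, rfl, hn⟩
    rw [Nat.cast_le] at this
    omega
  · rintro h _ ⟨i, rfl, hn⟩
    rw [Nat.cast_le]
    by_contra hlt
    exact not_nontrivial_iff_subsingleton.2 (h i (by omega)) hn

lemma Cut.maxIdeal_map {π : MvPoly K τ →ₐ[K] MvPoly K σ} {ι : MvPoly K σ →ₐ[K] MvPoly K τ}
    {θ : MvPoly K τ} {J : Ideal (MvPoly K τ)} {I : Ideal (MvPoly K σ)} (H : Cut π ι θ J I) :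
    (maxIdeal K τ).map π.toRingHom = maxIdeal K σ := by
  apply le_antisymm
  · rw [maxIdeal, Ideal.map_span, Ideal.span_le]
    rintro _ ⟨_, ⟨t, rfl⟩, rfl⟩
    exact H.max t
  · conv_lhs => rw [maxIdeal]
    rw [Ideal.span_le]
    rintro _ ⟨s, rfl⟩
    rw [← H.sect (X s)]
    exact Ideal.mem_map_of_mem π.toRingHom (H.max' s)

lemma homog_one_mem_maxIdeal {p : MvPoly K σ} (h : HomogComp K σ 1 p) : p ∈ maxIdeal K σ := by
  rw [homogComp_iff] at h
  rw [maxIdeal, ← Set.image_univ, mem_ideal_span_X_image]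
  intro m hm
  have := h m (mem_support_iff.1 hm)
  by_contra hne
  push Not at hne
  have h0 : m = 0 := by ext i; exact hne i trivial
  rw [h0] at this
  simp at this

theorem Cut.depth [Finite σ] [Finite τ] {π : MvPoly K τ →ₐ[K] MvPoly K σ}
    {ι : MvPoly K σ →ₐ[K] MvPoly K τ}
    {θ : MvPoly K τ} {J : Ideal (MvPoly K τ)} {I : Ideal (MvPoly K σ)} (H : Cut π ι θ J I) :
    depthQ K τ J = depthQ K σ I + 1 := by
  let : Algebra (MvPoly K τ) (MvPoly K σ) := π.toRingHom.toAlgebra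
  have hs : Function.Surjective (algebraMap (MvPoly K τ) (MvPoly K σ)) :=
    fun p => ⟨ι p, H.sect p⟩
  have h1 := fun n => extVanish_change hs (maxIdeal K τ) (maxIdeal K σ) H.maxIdeal_map n
    (MvPoly K σ ⧸ I)
  let q : (MvPoly K τ ⧸ J) →ₗ[MvPoly K τ] (MvPoly K σ ⧸ I) :=
    Submodule.liftQ J ((I.mkQ.restrictScalars (MvPoly K τ)) ∘ₗ Algebra.linearMap _ _) (by
      intro p hp
      rw [LinearMap.mem_ker]
      exact Ideal.Quotient.eq_zero_iff_mem.2 ((H.hI p).2 ⟨0, by simpa using hp⟩))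
  have hq : ∀ p, q (Ideal.Quotient.mk J p) = Ideal.Quotient.mk I (π p) := fun p => rfl
  have h2 := fun n => extVanish_succ_iff
    (X := ModuleCat.of (MvPoly K τ) (MvPoly K τ ⧸ maxIdeal K τ))
    (Y := ModuleCat.of (MvPoly K τ) (MvPoly K τ ⧸ J))
    (Y' := ModuleCat.of (MvPoly K τ) (MvPoly K σ ⧸ I)) θ
    (by
      intro y
      obtain ⟨y, rfl⟩ := Ideal.Quotient.mk_surjective y
      exact Ideal.Quotient.eq_zero_iff_mem.2
        (Ideal.mul_mem_right _ _ (homog_one_mem_maxIdeal H.hθ)))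
    H.regQ (ModuleCat.ofHom q)
    (by
      intro c
      obtain ⟨p, rfl⟩ := Ideal.Quotient.mk_surjective c
      exact ⟨Ideal.Quotient.mk J (ι p), (hq _).trans (by rw [H.sect])⟩)
    (by
      intro y
      obtain ⟨p, rfl⟩ := Ideal.Quotient.mk_surjective y
      change q (Ideal.Quotient.mk J p) = 0 ↔ _
      rw [hq, Ideal.Quotient.eq_zero_iff_mem, H.hI]
      constructor
      · rintro ⟨r, hr⟩
        exact ⟨Ideal.Quotient.mk J r, Ideal.Quotient.eq.2 hr⟩
      · rintro ⟨z, hz⟩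
        obtain ⟨r, rfl⟩ := Ideal.Quotient.mk_surjective z
        exact ⟨r, Ideal.Quotient.eq.1 hz⟩) n
  refine ENat.eq_of_forall_natCast_le_iff fun n => ?_
  cases n with
  | zero => simp
  | succ n =>
    rw [le_depthQ_iff, h2, h1, ← le_depthQ_iff]
    push_cast
    exact (ENat.add_le_add_iff_right (by simp)).symm

/-- `K[σ]/I` and `K[τ]/J` have the same bounds on twists of graded free resolutions, and
`depth K[τ]/J = depth K[σ]/I + d`. -/
def Shift (d : ℕ) (I : Ideal (MvPoly K σ)) (J : Ideal (MvPoly K τ)) : Prop :=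
  (∀ s, ResBound K τ J s ↔ ResBound K σ I s) ∧ depthQ K τ J = depthQ K σ I + d

lemma Cut.shift [Finite σ] [Finite τ] {π : MvPoly K τ →ₐ[K] MvPoly K σ}
    {ι : MvPoly K σ →ₐ[K] MvPoly K τ}
    {θ : MvPoly K τ} {J : Ideal (MvPoly K τ)} {I : Ideal (MvPoly K σ)} (H : Cut π ι θ J I) :
    Shift 1 I J :=
  ⟨fun s => ⟨H.resBound_cut s, H.resBound_lift s⟩, by simpa using H.depth⟩

lemma Shift.trans {ρ : Type} {c d : ℕ} {I : Ideal (MvPoly K σ)} {J : Ideal (MvPoly K τ)}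
    {A : Ideal (MvPoly K ρ)} (h : Shift c I J) (h' : Shift d J A) : Shift (c + d) I A :=
  ⟨fun s => (h'.1 s).trans (h.1 s), by rw [h'.2, h.2, add_assoc]; push_cast; rfl⟩

lemma Shift.cancel {ρ : Type} {d : ℕ} {I : Ideal (MvPoly K σ)} {J : Ideal (MvPoly K τ)}
    {A : Ideal (MvPoly K ρ)} (h : Shift d I A) (h' : Shift d J A) : Shift 0 I J :=
  ⟨fun s => (h'.1 s).symm.trans (h.1 s), by
    have := h'.2.symm.trans h.2
    rw [Nat.cast_zero, add_zero]
    exact ENat.add_left_injective_of_ne_top (ENat.natCast_ne_top d) this⟩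

end depth

/-! ### Hyperplane sections separating one variable -/

section build
variable {K : Type} [Field K] {σ τ : Type}

/-- `K[τ] ≅ K[σ][y]` when `τ` is `σ` with one more element. -/
def polyEquiv (e : τ ≃ Option σ) : MvPoly K τ ≃ₐ[K] Polynomial (MvPoly K σ) :=
  (renameEquiv K e).trans (optionEquivLeft K σ)

lemma polyEquiv_X (e : τ ≃ Option σ) (t : τ) : polyEquiv (K := K) e (X t) =
    (e t).elim Polynomial.X (fun s => Polynomial.C (X s)) := by
  simp only [polyEquiv, AlgEquiv.trans_apply, renameEquiv_apply, rename_X]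
  cases e t <;> simp

lemma polyEquiv_rename (e : τ ≃ Option σ) (p : MvPoly K σ) :
    polyEquiv e (rename (e.symm ∘ some) p) = Polynomial.C p := by
  have : ((polyEquiv (K := K) e).toAlgHom.comp (rename (e.symm ∘ some))) =
      IsScalarTower.toAlgHom K (MvPoly K σ) (Polynomial (MvPoly K σ)) := by
    ext1 s
    simp [polyEquiv_X]
  exact DFunLike.congr_fun this p

lemma polyEquiv_eval (e : τ ≃ Option σ) (a : MvPoly K σ) (p : MvPoly K τ) :
    aeval (fun t => (e t).elim a X) p = (polyEquiv e p).eval a := by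
  have : aeval (fun t => (e t).elim a X) =
      ((Polynomial.aeval (R := MvPoly K σ) a).restrictScalars K).comp
        (polyEquiv (K := K) e).toAlgHom := by
    ext1 t
    simp only [aeval_X, AlgHom.comp_apply]
    change _ = Polynomial.aeval a (polyEquiv e (X t))
    rw [polyEquiv_X]
    cases e t <;> simp
  rw [this]
  simp

/-- Membership in `J0 + y J1` (ideals extended to `R[y]`) is a condition on coefficients. -/
lemma mem_sum_iff {R : Type} [CommRing R] (J0 J1 : Ideal R) (P : Polynomial R) :
    P ∈ J0.map Polynomial.C ⊔ Ideal.span {Polynomial.X} * J1.map Polynomial.C ↔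
      P.coeff 0 ∈ J0 ∧ ∀ k, P.coeff (k + 1) ∈ J0 ⊔ J1 := by
  constructor
  · intro h
    obtain ⟨A, hA, B, hB, rfl⟩ := Submodule.mem_sup.1 h
    obtain ⟨C, hC, rfl⟩ := Ideal.mem_span_singleton_mul.1 hB
    rw [Ideal.mem_map_C_iff] at hA hC
    refine ⟨?_, fun k => ?_⟩
    · simpa using hA 0
    · rw [Polynomial.coeff_add, Polynomial.coeff_X_mul]
      exact Submodule.add_mem_sup (hA _) (hC _)
  · rintro ⟨h0, h1⟩
    rw [← Polynomial.divX_mul_X_add P]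
    refine Ideal.add_mem _ ?_ (Ideal.mem_sup_left (Ideal.mem_map_of_mem _ h0))
    have h2 : P.divX ∈ (J0 ⊔ J1).map Polynomial.C := by
      rw [Ideal.mem_map_C_iff]
      intro k
      rw [Polynomial.coeff_divX]
      exact h1 k
    rw [Ideal.map_sup] at h2
    obtain ⟨A, hA, B, hB, h3⟩ := Submodule.mem_sup.1 h2
    rw [← h3, add_mul]
    have hB' : B * Polynomial.X ∈ Ideal.span {Polynomial.X} * J1.map Polynomial.C := by
      rw [mul_comm B Polynomial.X]
      exact Ideal.mul_mem_mul (Ideal.mem_span_singleton_self _) hB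
    exact Ideal.add_mem _ (Ideal.mem_sup_left (Ideal.mul_mem_right _ _ hA))
      (Ideal.mem_sup_right hB')

lemma homogComp_aeval (g : τ → MvPoly K σ) (hg : ∀ t, HomogComp K σ 1 (g t)) (e : ℤ)
    (p : MvPoly K τ) (hp : HomogComp K τ e p) : HomogComp K σ e (aeval g p) := by
  unfold HomogComp at *
  split_ifs at hp ⊢ with h
  · rw [mem_homogeneousSubmodule] at hp ⊢
    have := hp.aeval g (n := 1) (fun t => by simpa using hg t)
    simpa using this
  · rw [hp, map_zero]

lemma homogComp_X (s : σ) : HomogComp K σ 1 (X s) := by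
  unfold HomogComp
  rw [if_pos (by norm_num), mem_homogeneousSubmodule]
  exact isHomogeneous_X _ _

lemma homogComp_rename (f : σ → τ) (e : ℤ) (p : MvPoly K σ) (hp : HomogComp K σ e p) :
    HomogComp K τ e (rename f p) := by
  rw [← aeval_X_left_apply (rename f p), aeval_rename]
  exact homogComp_aeval _ (fun t => homogComp_X _) _ _ hp

/-- Monomial ideals are homogeneous. -/
lemma hc_mem_span (T : Set (σ →₀ ℕ)) (e : ℤ) (p : MvPoly K σ)
    (hp : p ∈ Ideal.span ((fun s => monomial s (1 : K)) '' T)) :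
    hc e p ∈ Ideal.span ((fun s => monomial s (1 : K)) '' T) := by
  rw [mem_ideal_span_monomial_image] at hp ⊢
  intro m hm
  refine hp m ?_
  rw [mem_support_iff, coeff_hc] at hm
  rw [mem_support_iff]
  intro h
  simp [h] at hm

/-- Let `K[τ] = K[σ][y]`, let `J = J0 + y J1` with `J0, J1` extended from `K[σ]`, and let `a` be a
linear form of `K[σ]` that is regular modulo `J0` on `J0 + J1`.  Then `y - a` is regular modulo
`J`, and substituting `y = a` turns `J` into `J0 + a J1`. -/
theorem cut_of (e : τ ≃ Option σ) (a : MvPoly K σ) (ha : HomogComp K σ 1 a)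
    (J0 J1 I : Ideal (MvPoly K σ)) (J : Ideal (MvPoly K τ))
    (hreg : ∀ p ∈ J0 ⊔ J1, a * p ∈ J0 → p ∈ J0)
    (hI : I = J0 ⊔ Ideal.span {a} * J1)
    (hJ : J.map (polyEquiv e).toRingEquiv.toRingHom =
      J0.map Polynomial.C ⊔ Ideal.span {Polynomial.X} * J1.map Polynomial.C)
    (hom : ∀ e, ∀ p ∈ J, hc e p ∈ J) :
    Cut (aeval (fun t => (e t).elim a X)) (rename (e.symm ∘ some))
      (X (e.symm none) - rename (e.symm ∘ some) a) J I := by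
  have hθ : polyEquiv e (X (e.symm none) - rename (e.symm ∘ some) a) =
      Polynomial.X - Polynomial.C a := by
    rw [map_sub, polyEquiv_X, polyEquiv_rename]; simp
  have memJ : ∀ p, p ∈ J ↔ (polyEquiv e p).coeff 0 ∈ J0 ∧
      ∀ k, (polyEquiv e p).coeff (k + 1) ∈ J0 ⊔ J1 := by
    intro p
    rw [← mem_sum_iff, ← hJ]
    exact (Ideal.mem_map_of_equiv (polyEquiv (K := K) e).toRingEquiv _).trans
      ⟨fun ⟨x, hx, h⟩ => (polyEquiv (K := K) e).injective h ▸ hx, fun h => ⟨p, h, rfl⟩⟩ |>.symm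
  have hker : ∀ p, aeval (fun t => (e t).elim a X) p = 0 ↔
      ∃ q, p = (X (e.symm none) - rename (e.symm ∘ some) a) * q := by
    intro p
    rw [polyEquiv_eval]
    constructor
    · intro h
      obtain ⟨Q, hQ⟩ := Polynomial.dvd_iff_isRoot.2 h
      refine ⟨(polyEquiv e).symm Q, (polyEquiv (K := K) e).injective ?_⟩
      rw [map_mul, hθ, hQ, AlgEquiv.apply_symm_apply]
    · rintro ⟨q, rfl⟩
      rw [map_mul, hθ]
      simp
  have hgen : ∀ t, HomogComp K σ 1 ((e t).elim a X) := by
    intro t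
    cases e t with
    | none => exact ha
    | some s => exact homogComp_X s
  refine ⟨?_, homogComp_aeval _ hgen, homogComp_rename _, ?_, ?_, hker, ?_, ?_, hom, ?_, ?_⟩
  · intro p
    rw [polyEquiv_eval, polyEquiv_rename, Polynomial.eval_C]
  · have h1 := homogComp_X (K := K) (e.symm none)
    have h2 := homogComp_rename (e.symm ∘ some) _ _ ha
    unfold HomogComp at *
    rw [if_pos (by norm_num)] at *
    exact Submodule.sub_mem _ h1 h2
  · intro h
    rw [h, map_zero] at hθ
    exact Polynomial.X_sub_C_ne_zero a hθ.symm
  · intro p hp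
    rw [memJ, map_mul, hθ] at hp
    rw [memJ]
    obtain ⟨h0, h1⟩ := hp
    set P := polyEquiv e p
    -- descending induction on the degree: all coefficients lie in `J0 ⊔ J1`
    have key : ∀ d k, P.natDegree < k + d → P.coeff k ∈ J0 ⊔ J1 := by
      intro d
      induction d with
      | zero =>
        intro k hk
        rw [Polynomial.coeff_eq_zero_of_natDegree_lt (by omega)]
        exact Ideal.zero_mem _
      | succ d ih =>
        intro k hk
        have h3 := h1 k
        rw [sub_mul, Polynomial.coeff_sub, Polynomial.coeff_X_mul, Polynomial.coeff_C_mul] at h3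
        have h4 := Ideal.add_mem _ h3 (Ideal.mul_mem_left _ a (ih (k + 1) (by omega)))
        simpa using h4
    have key' : ∀ k, P.coeff k ∈ J0 ⊔ J1 := fun k => key (P.natDegree + 1) k (by omega)
    refine ⟨hreg _ (key' 0) ?_, fun k => key' _⟩
    rw [sub_mul, Polynomial.coeff_sub, Polynomial.coeff_X_mul_zero, Polynomial.coeff_C_mul,
      zero_sub] at h0
    simpa using J0.neg_mem h0
  · intro p
    constructor
    · intro h
      rw [hI] at h
      obtain ⟨j0, h0, z, hz, hsum⟩ := Submodule.mem_sup.1 h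
      obtain ⟨j1, h1, rfl⟩ := Ideal.mem_span_singleton_mul.1 hz
      let p' : MvPoly K τ := (polyEquiv e).symm
        (Polynomial.C j0 + Polynomial.X * Polynomial.C j1)
      have hp' : polyEquiv e p' = Polynomial.C j0 + Polynomial.X * Polynomial.C j1 :=
        AlgEquiv.apply_symm_apply _ _
      obtain ⟨q, hq⟩ := (hker (p - p')).1 (by
        rw [map_sub, ← hsum, polyEquiv_eval, hp']; simp only [Polynomial.eval_add, Polynomial.eval_C,
          Polynomial.eval_mul, Polynomial.eval_X]; ring)
      refine ⟨q, ?_⟩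
      rw [← hq, sub_sub_cancel, memJ, hp', ← mem_sum_iff]
      exact Submodule.add_mem_sup (Ideal.mem_map_of_mem _ h0)
        (Ideal.mul_mem_mul (Ideal.mem_span_singleton_self _) (Ideal.mem_map_of_mem _ h1))
    · rintro ⟨q, hq⟩
      have h1 : aeval (fun t => (e t).elim a X) p = aeval (fun t => (e t).elim a X)
          (p - (X (e.symm none) - rename (e.symm ∘ some) a) * q) := by
        rw [map_sub, (hker ((X (e.symm none) - rename (e.symm ∘ some) a) * q)).2 ⟨q, rfl⟩,
          sub_zero]
      rw [h1, polyEquiv_eval]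
      rw [memJ] at hq
      obtain ⟨c0, c1⟩ := hq
      set P := polyEquiv e (p - (X (e.symm none) - rename (e.symm ∘ some) a) * q)
      have h2 : P.divX.eval a ∈ J0 ⊔ J1 := by
        rw [Polynomial.eval_eq_sum_range]
        refine Ideal.sum_mem _ fun k _ => Ideal.mul_mem_right _ _ ?_
        rw [Polynomial.coeff_divX]
        exact c1 k
      have h3 : P.eval a = P.divX.eval a * a + P.coeff 0 := by
        conv_lhs => rw [← Polynomial.divX_mul_X_add P]
        simp
      rw [h3, hI]
      refine Ideal.add_mem _ ?_ (Ideal.mem_sup_left c0)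
      obtain ⟨x, hx, y, hy, hxy⟩ := Submodule.mem_sup.1 h2
      rw [← hxy, add_mul]
      refine Submodule.add_mem_sup (Ideal.mul_mem_right _ _ hx) ?_
      rw [mul_comm y a]
      exact Ideal.mul_mem_mul (Ideal.mem_span_singleton_self _) hy
  · intro t
    rw [aeval_X]
    exact homog_one_mem_maxIdeal (hgen t)
  · intro s
    rw [rename_X]
    exact Ideal.subset_span ⟨_, rfl⟩

/-- Bijective renaming of variables changes neither depth nor regularity: the ideal and its renamed
version are hyperplane sections, by the extra variable, of one ideal in `K[Option σ]`. -/
lemma shift_rename [Finite σ] [Finite τ] (f : σ ≃ τ) (T : Set (σ →₀ ℕ)) :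
    Shift 0 (Ideal.span ((fun s => monomial s (1 : K)) '' T))
      (Ideal.span ((fun s => monomial s (1 : K)) '' (Finsupp.mapDomain f '' T))) := by
  have hmap : ∀ {ρ ρ' : Type} (g : ρ → ρ') (U : Set (ρ →₀ ℕ)),
      (Ideal.span ((fun s => monomial s (1 : K)) '' U)).map (rename (R := K) g).toRingHom =
      Ideal.span ((fun s => monomial s (1 : K)) '' (Finsupp.mapDomain g '' U)) := by
    intro ρ ρ' g U
    rw [Ideal.map_span]
    congr 1
    rw [Set.image_image, Set.image_image]
    refine Set.image_congr fun u _ => ?_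
    exact rename_monomial _ _ _
  have gen : ∀ {ρ : Type} (e : Option σ ≃ Option ρ) (U : Set (ρ →₀ ℕ)),
      Cut (aeval (fun t => (e t).elim 0 X)) (rename (e.symm ∘ some))
      (X (e.symm none) - rename (e.symm ∘ some) 0)
      (Ideal.span ((fun s => monomial s (1 : K)) '' (Finsupp.mapDomain (e.symm ∘ some) '' U)))
      (Ideal.span ((fun s => monomial s (1 : K)) '' U)) := by
    intro ρ e U
    refine cut_of e 0 ?_ (Ideal.span ((fun s => monomial s (1 : K)) '' U))
      (Ideal.span ((fun s => monomial s (1 : K)) '' U)) _ _ ?_ ?_ ?_ ?_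
    · rw [homogComp_iff]; intro m hm; simp at hm
    · intro p hp _
      simpa using hp
    · simp
    · rw [← hmap, Ideal.map_map]
      have : ((polyEquiv (K := K) e).toRingEquiv.toRingHom.comp
          (rename (R := K) (e.symm ∘ some)).toRingHom) = Polynomial.C :=
        RingHom.ext fun p => polyEquiv_rename e p
      rw [this]
      refine (sup_eq_left.2 ?_).symm
      exact Ideal.mul_le_right
    · exact fun d p hp => hc_mem_span _ d p hp
  have c1 := (gen (Equiv.refl (Option σ)) T).shift
  have c2 := (gen (Equiv.optionCongr f) (Finsupp.mapDomain f '' T)).shift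
  refine c1.cancel (τ := τ) ?_
  convert c2 using 3
  rw [Set.image_image]
  refine Set.image_congr fun u _ => ?_
  rw [← Finsupp.mapDomain_comp]
  congr 1
  funext s
  exact (Equiv.eq_symm_apply _).2 rfl

end build
end


/-! ### Polarization one variable at a time -/

noncomputable section
section polarize
variable {K : Type} [Field K] {σ τ : Type}

lemma polyEquiv_monomial (e : τ ≃ Option σ) (d : τ →₀ ℕ) :
    polyEquiv e (monomial d (1 : K)) =
      Polynomial.monomial (d (e.symm none)) (monomial (Finsupp.mapDomain e d).some 1) := by
  rw [polyEquiv, AlgEquiv.trans_apply, renameEquiv_apply, rename_monomial,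
    optionEquivLeft_monomial]
  congr 2
  conv_lhs => rw [← e.apply_symm_apply none]
  exact Finsupp.mapDomain_apply e.injective _ _

lemma mapDomain_some_apply (e : τ ≃ Option σ) (d : τ →₀ ℕ) (s : σ) :
    (Finsupp.mapDomain e d).some s = d (e.symm (some s)) := by
  rw [Finsupp.some_apply]
  conv_lhs => rw [← e.apply_symm_apply (some s)]
  exact Finsupp.mapDomain_apply e.injective _ _

lemma span_mul_image {R α : Type} [CommRing R] (a : R) (f : α → R) (T : Set α) :
    Ideal.span {a} * Ideal.span (f '' T) = Ideal.span ((fun t => a * f t) '' T) := by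
  rw [Ideal.span_mul_span', Set.singleton_mul, Set.image_image]

/-- One polarization step on exponent vectors.  The monomials `x^(v t)` involve the extra variable
`y` at most to the first power; those without `y` are also free of `x_i`, and replacing `y` by
`x_i` gives `x^(u t)`. -/
theorem shift_step {α : Type} [Finite σ] [Finite τ] (e : τ ≃ Option σ) (i : σ) (T : Set α)
    (u : α → σ →₀ ℕ) (v : α → τ →₀ ℕ)
    (h : ∀ t ∈ T,
      (v t (e.symm none) = 0 ∧ u t i = 0 ∧ ∀ s, u t s = v t (e.symm (some s))) ∨
      (v t (e.symm none) = 1 ∧ u t i = v t (e.symm (some i)) + 1 ∧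
        ∀ s ≠ i, u t s = v t (e.symm (some s)))) :
    Shift 1 (Ideal.span ((fun t => monomial (u t) (1 : K)) '' T))
      (Ideal.span ((fun t => monomial (v t) (1 : K)) '' T)) := by
  let w : α → σ →₀ ℕ := fun t => (Finsupp.mapDomain e (v t)).some
  let T0 := {t ∈ T | v t (e.symm none) = 0}
  let T1 := {t ∈ T | v t (e.symm none) = 1}
  have hT : T = T0 ∪ T1 := by
    ext t
    constructor
    · intro ht
      rcases h t ht with h | h
      · exact Or.inl ⟨ht, h.1⟩
      · exact Or.inr ⟨ht, h.1⟩
    · rintro (h | h) <;> exact h.1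
  have h0 : ∀ t ∈ T0, u t i = 0 ∧ u t = w t := by
    rintro t ⟨ht, ht0⟩
    rcases h t ht with h | h
    · refine ⟨h.2.1, Finsupp.ext fun s => ?_⟩
      rw [h.2.2 s, mapDomain_some_apply]
    · omega
  have h1 : ∀ t ∈ T1, u t = Finsupp.single i 1 + w t := by
    rintro t ⟨ht, ht0⟩
    rcases h t ht with h | h
    · omega
    · refine Finsupp.ext fun s => ?_
      rw [Finsupp.add_apply, mapDomain_some_apply]
      by_cases hs : s = i
      · subst hs
        rw [h.2.1, Finsupp.single_eq_same, add_comm]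
      · rw [h.2.2 s hs, Finsupp.single_eq_of_ne hs, zero_add]
  refine (cut_of e (X i) (homogComp_X i)
    (Ideal.span ((fun t => monomial (w t) (1 : K)) '' T0))
    (Ideal.span ((fun t => monomial (w t) (1 : K)) '' T1)) _ _ ?_ ?_ ?_ ?_).shift
  · -- the generators of `J0` do not involve `x_i`, so `x_i` is regular modulo `J0`
    intro p _ hp
    have himg : (fun t => monomial (w t) (1 : K)) '' T0 =
        (fun s => monomial s (1 : K)) '' (w '' T0) := by rw [Set.image_image]
    rw [himg, mem_ideal_span_monomial_image] at hp ⊢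
    intro m hm
    obtain ⟨_, ⟨t, ht, rfl⟩, hle⟩ := hp (Finsupp.single i 1 + m) (by
      rw [mem_support_iff, coeff_X_mul]
      exact mem_support_iff.1 hm)
    refine ⟨_, ⟨t, ht, rfl⟩, fun s => ?_⟩
    have := hle s
    by_cases hs : s = i
    · subst hs
      rw [← (h0 t ht).2, (h0 t ht).1]
      exact Nat.zero_le _
    · rwa [Finsupp.add_apply, Finsupp.single_eq_of_ne hs, zero_add] at this
  · rw [span_mul_image, hT, Set.image_union, Ideal.span_union]
    congr 2
    · exact Set.image_congr fun t ht => by rw [(h0 t ht).2]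
    · refine Set.image_congr fun t ht => ?_
      rw [h1 t ht, X, monomial_mul, one_mul]
  · rw [Ideal.map_span, Ideal.map_span, Ideal.map_span, Set.image_image, Set.image_image,
      Set.image_image, span_mul_image, hT, Set.image_union, Ideal.span_union]
    congr 2
    · refine Set.image_congr fun t ht => ?_
      refine (polyEquiv_monomial e (v t)).trans ?_
      rw [ht.2, Polynomial.monomial_zero_left]
    · refine Set.image_congr fun t ht => ?_
      refine (polyEquiv_monomial e (v t)).trans ?_
      rw [ht.2, Polynomial.X_mul_C, ← Polynomial.C_mul_X_eq_monomial]
  · intro d p hp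
    have himg : (fun t => monomial (v t) (1 : K)) '' T =
        (fun s => monomial s (1 : K)) '' (v '' T) := by rw [Set.image_image]
    rw [himg] at hp ⊢
    exact hc_mem_span _ d p hp

instance polVars_finite (n : ℕ) (γ : Fin n → ℕ) : Finite (PolVars n γ) := by
  refine Finite.of_injective (β := (i : Fin n) × Fin (γ i + 1))
    (fun p => ⟨p.1.1, ⟨p.1.2, Nat.lt_succ_of_le p.2.2⟩⟩) ?_
  rintro ⟨⟨i, j⟩, h⟩ ⟨⟨i', j'⟩, h'⟩ heq
  simp only [Sigma.mk.injEq] at heq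
  obtain ⟨rfl, heq⟩ := heq
  have := congrArg Fin.val (eq_of_heq heq)
  simp only at this
  subst this
  rfl

/-- The exponent vector of the polarization of `x^a`.  It is defined for every `γ`, with the
part of `x_i^(a i)` beyond `x_{i,2} ⋯ x_{i,γ i}` put on `x_i` itself. -/
def pexp {n : ℕ} (γ : Fin n → ℕ) (a : Fin n →₀ ℕ) : (Fin n ⊕ PolVars n γ) →₀ ℕ :=
  Finsupp.equivFunOnFinite.symm (Sum.elim (fun i => a i - (γ i - 1))
    (fun p => if p.1.2 ≤ a p.1.1 + 1 then 1 else 0))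

@[simp] lemma pexp_inl {n : ℕ} (γ : Fin n → ℕ) (a : Fin n →₀ ℕ) (i : Fin n) :
    pexp γ a (Sum.inl i) = a i - (γ i - 1) := rfl

@[simp] lemma pexp_inr {n : ℕ} (γ : Fin n → ℕ) (a : Fin n →₀ ℕ) (p : PolVars n γ) :
    pexp γ a (Sum.inr p) = if p.1.2 ≤ a p.1.1 + 1 then 1 else 0 := rfl

/-- Raising `γ i` by one adds the single variable `x_{i, γ i + 1}`. -/
def addVar {n : ℕ} (γ δ : Fin n → ℕ) (i : Fin n) (hi : δ i = γ i + 1) (h1 : 1 ≤ γ i)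
    (hne : ∀ j ≠ i, δ j = γ j) :
    Fin n ⊕ PolVars n δ ≃ Option (Fin n ⊕ PolVars n γ) where
  toFun := Sum.elim (fun j => some (Sum.inl j)) fun p =>
    if h : p.1.2 ≤ γ p.1.1 then some (Sum.inr ⟨p.1, p.2.1, h⟩) else none
  invFun := fun o => o.elim (Sum.inr ⟨(i, γ i + 1), by simp only; omega, by simp only; omega⟩)
    (Sum.elim Sum.inl fun p => Sum.inr ⟨p.1, p.2.1, p.2.2.trans (by
      by_cases h : p.1.1 = i
      · rw [h]; omega
      · rw [hne _ h])⟩)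
  left_inv := by
    rintro (j | ⟨⟨j, l⟩, hl⟩)
    · rfl
    · by_cases h : l ≤ γ j
      · change Option.elim (dite (l ≤ γ j) _ _) _ _ = _
        rw [dif_pos h]
        rfl
      · have hj : j = i := by
          by_contra hj
          have := hl.2
          simp only [hne j hj] at this
          exact h this
        subst hj
        have hl2 := hl.2
        simp only [hi] at hl2
        have : l = γ j + 1 := by omega
        subst this
        change Option.elim (dite (γ j + 1 ≤ γ j) _ _) _ _ = _
        rw [dif_neg h]
        rfl
  right_inv := by
    rintro (_ | (j | ⟨⟨j, l⟩, hl⟩))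
    · change dite (γ i + 1 ≤ γ i) _ _ = _
      rw [dif_neg (by omega)]
    · rfl
    · change dite (l ≤ γ j) _ _ = _
      rw [dif_pos hl.2]

/-- Polarizing all monomials of `T` up to `γ` keeps the regularity and raises the depth by the
number `N` of new variables. -/
theorem shift_chain {n : ℕ} (T : Set (Fin n →₀ ℕ)) (N : ℕ) :
    ∀ γ : Fin n → ℕ, ∑ i, (γ i - 1) = N →
      Shift N (Ideal.span (mono K '' T))
        (Ideal.span ((fun a => monomial (pexp γ a) (1 : K)) '' T)) := by
  induction N with
  | zero =>
    intro γ hγ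
    have hγ' : ∀ i, γ i - 1 = 0 := fun i => Finset.sum_eq_zero_iff.1 hγ i (Finset.mem_univ i)
    have : IsEmpty (PolVars n γ) := ⟨fun p => by
      have := hγ' p.1.1
      have := p.2
      omega⟩
    have key := shift_rename (K := K) (Equiv.sumEmpty (Fin n) (PolVars n γ)).symm T
    rw [Set.image_image] at key
    refine (congrArg (fun U => Shift 0 (Ideal.span (mono K '' T)) (Ideal.span U))
      (Set.image_congr fun a _ => ?_)).mpr key
    refine congrArg (fun d => monomial d (1 : K)) (Finsupp.ext ?_)
    rintro (i | p)
    · have h2 : (Sum.inl i : Fin n ⊕ PolVars n γ) =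
        (Equiv.sumEmpty (Fin n) (PolVars n γ)).symm i := rfl
      rw [pexp_inl, hγ', Nat.sub_zero, h2,
        Finsupp.mapDomain_apply (Equiv.injective _)]
    · exact isEmptyElim p
  | succ N ih =>
    intro γ hγ
    obtain ⟨i, hi⟩ : ∃ i, γ i - 1 ≠ 0 := by
      by_contra hcon
      push Not at hcon
      simp [hcon] at hγ
    let γ' := Function.update γ i (γ i - 1)
    have hi' : γ i = γ' i + 1 := by simp only [γ', Function.update_self]; omega
    have h1 : 1 ≤ γ' i := by omega
    have hne : ∀ j ≠ i, γ j = γ' j := fun j hj => (Function.update_of_ne hj _ _).symm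
    have hsum : ∑ i, (γ' i - 1) = N := by
      rw [← Finset.add_sum_erase _ _ (Finset.mem_univ i)] at hγ ⊢
      rw [Finset.sum_congr rfl fun j hj => by rw [hne j (Finset.ne_of_mem_erase hj)]] at hγ
      omega
    refine (ih γ' hsum).trans (shift_step (addVar γ' γ i hi' h1 hne) (Sum.inl i) T
      (pexp γ') (pexp γ) fun a _ => ?_)
    have hnone : pexp γ a ((addVar γ' γ i hi' h1 hne).symm none) =
      if γ' i + 1 ≤ a i + 1 then 1 else 0 := rfl
    have hinl : ∀ j, pexp γ a ((addVar γ' γ i hi' h1 hne).symm (some (Sum.inl j))) =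
      a j - (γ j - 1) := fun j => rfl
    have hinr : ∀ p, pexp γ a ((addVar γ' γ i hi' h1 hne).symm (some (Sum.inr p))) =
      pexp γ' a (Sum.inr p) := fun p => rfl
    by_cases hlt : γ' i ≤ a i
    · right
      refine ⟨by rw [hnone, if_pos (by omega)], by rw [hinl, pexp_inl]; omega, ?_⟩
      rintro (j | p) hj
      · rw [hinl, pexp_inl, hne j fun h => hj (by rw [h])]
      · rw [hinr]
    · left
      refine ⟨by rw [hnone, if_neg (by omega)], by rw [pexp_inl]; omega, ?_⟩
      rintro (j | p)
      · rw [hinl, pexp_inl]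
        by_cases hj : j = i
        · subst hj; omega
        · rw [hne j hj]
      · rw [hinr]

lemma sum_attach_single {V : Type} (s : Finset ℕ) (F : s → V) (hF : Function.Injective F)
    (v : V) [Decidable (∃ j, F j = v)] :
    (∑ j ∈ s.attach, Finsupp.single (F j) 1) v = if ∃ j, F j = v then 1 else 0 := by
  classical
  rw [Finsupp.finsetSum_apply]
  simp only [Finsupp.single_apply]
  split_ifs with h
  · obtain ⟨j, rfl⟩ := h
    simp [hF.eq_iff]
  · push Not at h
    simp [h]

lemma polMono_eq {n : ℕ} (γ : Fin n → ℕ) (a : Fin n →₀ ℕ) (h : ∀ i, a i ≤ γ i) :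
    polMono K γ a = monomial (pexp γ a) 1 := by
  classical
  -- the `i`-th factor is the part of the monomial on `x_i, x_{i,2}, …, x_{i,γ i}`
  have hf : ∀ i, ∃ d : (Fin n ⊕ PolVars n γ) →₀ ℕ, polFactor K γ i (a i) = monomial d 1 ∧
      (∀ j, d (Sum.inl j) = if j = i then pexp γ a (Sum.inl j) else 0) ∧
      ∀ p : PolVars n γ, d (Sum.inr p) = if p.1.1 = i then pexp γ a (Sum.inr p) else 0 := by
    intro i
    have hi := h i
    have hX : ∀ v : Fin n ⊕ PolVars n γ, (X v : MvPoly K _) = monomial (Finsupp.single v 1) 1 :=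
      fun v => rfl
    have hinj : ∀ (m : ℕ) (hm : ∀ j : Finset.Icc 2 m, 2 ≤ (j : ℕ) ∧ (j : ℕ) ≤ γ i),
        Function.Injective (fun j : Finset.Icc 2 m =>
          (Sum.inr ⟨(i, (j : ℕ)), hm j⟩ : Fin n ⊕ PolVars n γ)) := by
      intro m hm j j' hjj
      have h1 : (⟨(i, (j : ℕ)), hm j⟩ : PolVars n γ) = ⟨(i, (j' : ℕ)), hm j'⟩ :=
        Sum.inr_injective hjj
      have h2 := congrArg (fun p : PolVars n γ => p.1.2) h1
      exact Subtype.ext h2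
    have hex : ∀ (m : ℕ) (hm : ∀ j : Finset.Icc 2 m, 2 ≤ (j : ℕ) ∧ (j : ℕ) ≤ γ i)
        (p : PolVars n γ),
        (∃ j : Finset.Icc 2 m, (Sum.inr ⟨(i, (j : ℕ)), hm j⟩ : Fin n ⊕ PolVars n γ) = Sum.inr p) ↔
          p.1.1 = i ∧ p.1.2 ≤ m := by
      intro m hm p
      constructor
      · rintro ⟨j, hj⟩
        have h1 : (⟨(i, (j : ℕ)), hm j⟩ : PolVars n γ) = p := Sum.inr_injective hj
        rw [← h1]
        exact ⟨rfl, (Finset.mem_Icc.1 j.2).2⟩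
      · rintro ⟨h1, h2⟩
        refine ⟨⟨p.1.2, Finset.mem_Icc.2 ⟨p.2.1, h2⟩⟩, congrArg Sum.inr (Subtype.ext ?_)⟩
        exact Prod.ext h1.symm rfl
    unfold polFactor
    simp only [hX]
    split_ifs with h0 hc
    · refine ⟨0, rfl, fun j => ?_, fun p => ?_⟩
      · rw [pexp_inl, Finsupp.zero_apply]
        split_ifs with hj
        · rw [hj]; omega
        · rfl
      · rw [pexp_inr, Finsupp.zero_apply]
        have := p.2.1
        split_ifs with hj hl
        · rw [hj] at hl; omega
        · rfl
        · rfl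
    · refine ⟨_, by rw [← monomial_sum_one, monomial_mul, one_mul], fun j => ?_, fun p => ?_⟩
      · rw [Finsupp.add_apply, sum_attach_single _ _ (hinj _ _), if_neg (by simp), pexp_inl,
          Finsupp.single_apply, add_zero]
        by_cases hj : j = i
        · subst hj; simp; omega
        · rw [if_neg hj, if_neg fun h => hj (Sum.inl_injective h).symm]
      · rw [Finsupp.add_apply, sum_attach_single _ _ (hinj _ _), pexp_inr,
          Finsupp.single_eq_of_ne (by simp), zero_add]
        simp only [hex]
        have := p.2.2
        by_cases hj : p.1.1 = i
        · rw [hj] at this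
          rw [if_pos ⟨hj, this⟩, if_pos hj, if_pos (by rw [hj]; omega)]
        · rw [if_neg fun h => hj h.1, if_neg hj]
    · refine ⟨_, by rw [← monomial_sum_one], fun j => ?_, fun p => ?_⟩
      · rw [sum_attach_single _ _ (hinj _ _), if_neg (by simp), pexp_inl]
        split_ifs with hj
        · rw [hj]; omega
        · rfl
      · rw [sum_attach_single _ _ (hinj _ _), pexp_inr]
        simp only [hex]
        by_cases hj : p.1.1 = i
        · simp [hj]
        · simp [hj]
  choose d hd hl hr using hf
  unfold polMono
  simp only [hd]
  rw [← monomial_sum_one]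
  refine congrArg (fun d => monomial d (1 : K)) (Finsupp.ext fun v => ?_)
  rw [Finsupp.finsetSum_apply]
  rcases v with j | p
  · simp only [hl]
    simp
  · simp only [hr]
    simp

lemma Shift.cmreg {d : ℕ} {I : Ideal (MvPoly K σ)} {J : Ideal (MvPoly K τ)} (h : Shift d I J) :
    CMreg K τ J = CMreg K σ I := by
  have : ResBound K τ J = ResBound K σ I := funext fun s => propext (h.1 s)
  classical
  change (fun P : ℤ → Prop => if h : ∃ r, P r ∧ ∀ s, P s → r ≤ s
    then ((h.choose : ℤ) : WithBot ℤ) else ⊥) (ResBound K τ J) = _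
  rw [this]
  rfl

end polarize
end


/-- the depth and regularity of a monomial ideal via polarization.
Part (i) is the difference formula
`depth(R[X_L]/L^pol) - depth(R[X_L]/(f_1^pol, …, f_r^pol)) = depth(R/L) - depth(R/I)`,
written additively. -/
theorem stmt3 (K : Type) [Field K] (n : ℕ)
    (I : Ideal (MvPoly K (Fin n))) (S : Finset (Fin n →₀ ℕ))
    (hmin : ∀ a ∈ S, ∀ b ∈ S, a ≤ b → a = b)
    (hI : I = Ideal.span (mono K '' ↑S))
    (fa : Fin n →₀ ℕ) (L : Ideal (MvPoly K (Fin n)))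
    (hL : L = Ideal.span {mono K fa} + I)
    (γ : Fin n → ℕ) (hγ : γ = fun i => (insert fa S).sup fun a => a i)
    (Lpol Ipol : Ideal (MvPoly K (Fin n ⊕ PolVars n γ)))
    (hLpol : Lpol = Ideal.span (polMono K γ '' ↑(insert fa S)))
    (hIpol : Ipol = Ideal.span (polMono K γ '' ↑S)) :
    (depthQ K (Fin n ⊕ PolVars n γ) Lpol + depthQ K (Fin n) I =
      depthQ K (Fin n ⊕ PolVars n γ) Ipol + depthQ K (Fin n) L) ∧
    (CMreg K (Fin n ⊕ PolVars n γ) Lpol = CMreg K (Fin n) L ∧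
      CMreg K (Fin n ⊕ PolVars n γ) Ipol = CMreg K (Fin n) I) := by
  have hle : ∀ a ∈ insert fa S, ∀ i, a i ≤ γ i := by
    intro a ha i
    rw [hγ]
    exact Finset.le_sup (f := fun a : Fin n →₀ ℕ => a i) ha
  have hL' : L = Ideal.span (mono K '' ↑(insert fa S)) := by
    rw [hL, hI, Finset.coe_insert, Set.image_insert_eq, Ideal.span_insert]
    rfl
  have hLp : Lpol = Ideal.span ((fun a => monomial (pexp γ a) (1 : K)) '' ↑(insert fa S)) := by
    rw [hLpol]
    exact congrArg Ideal.span (Set.image_congr fun a ha => polMono_eq γ a (hle a ha))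
  have hIp : Ipol = Ideal.span ((fun a => monomial (pexp γ a) (1 : K)) '' ↑S) := by
    rw [hIpol]
    exact congrArg Ideal.span (Set.image_congr fun a ha =>
      polMono_eq γ a (hle a (Finset.mem_insert_of_mem ha)))
  -- both depths grow by the number `∑ (γ i - 1)` of new variables
  have sL := shift_chain (K := K) (↑(insert fa S)) _ γ rfl
  have sI := shift_chain (K := K) (↑S) _ γ rfl
  rw [← hL', ← hLp] at sL
  rw [← hI, ← hIp] at sI
  refine ⟨?_, sL.cmreg, sI.cmreg⟩
  rw [sL.2, sI.2]
  ring
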